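/- arXiv:1512.00079 — 2 statements merged into one kernel-verified Lean document; each statement's English description precedes it below -/
import Mathlib

section
/- Let n ≥ 2 and let φ be an endomorphism of Houghton's group H_n with nontrivial kernel. Then: (i) φ(FSym_n) ⊆ FSym_n and FAlt_n ⊆ ker φ; (ii) writing φ' for the induced endomorphism of FSym_n/FAlt_n and φ̄ for the induced endomorphism of H_n/FSym_n (a finitely generated free abelian group of rank n−1), if φ' is nontrivial and φ̄ is eventually trivial then GR(φ) = 1, and otherwise GR(φ) = GR(φ̄). -/
/-! ## Houghton's groups: basic setup -/

/-- The underlying set of Houghton's group: `n` rays of discrete points;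
`(i, p)` is the point at position `p` on the ray `R_i`. -/
abbrev XH (n : ℕ) : Type := Fin n × ℕ

/-- `g` acts, outside a finite set, as the translation by `m i` on the ray `R_i`. -/
def HasTranslationVector {n : ℕ} (g : Equiv.Perm (XH n)) (m : Fin n → ℤ) : Prop :=
  ∃ K : Finset (XH n), ∀ x : XH n, x ∉ K →
    (g x).1 = x.1 ∧ ((g x).2 : ℤ) = (x.2 : ℤ) + m x.1

/-- An eventual translation of `X_n`. -/
def IsEventualTranslation {n : ℕ} (g : Equiv.Perm (XH n)) : Prop :=
  ∃ m : Fin n → ℤ, HasTranslationVector g m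

/-- Houghton's group `H_n`: the group of all eventual translations of `X_n`. -/
def Houghton (n : ℕ) : Subgroup (Equiv.Perm (XH n)) where
  carrier := {g | IsEventualTranslation g}
  one_mem' := ⟨0, ∅, fun x _ => by simp⟩
  mul_mem' := by
    rintro a b ⟨ma, Ka, hKa⟩ ⟨mb, Kb, hKb⟩
    classical
    refine ⟨ma + mb, Kb ∪ Kb.image b ∪ Ka.image b.symm, fun x hx => ?_⟩
    simp only [Finset.mem_union, not_or] at hx
    have hxb : x ∉ Kb := hx.1.1
    have hbx : b x ∉ Ka := by
      intro hc
      exact hx.2 (Finset.mem_image.mpr ⟨b x, hc, b.symm_apply_apply x⟩)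
    obtain ⟨hb1, hb2⟩ := hKb x hxb
    obtain ⟨ha1, ha2⟩ := hKa (b x) hbx
    refine ⟨?_, ?_⟩
    · show (a (b x)).1 = x.1
      rw [ha1, hb1]
    · show ((a (b x)).2 : ℤ) = (x.2 : ℤ) + (ma + mb) x.1
      rw [ha2, hb1, hb2, Pi.add_apply]
      ring
  inv_mem' := by
    rintro a ⟨m, K, hK⟩
    classical
    refine ⟨-m, K.image a, fun x hx => ?_⟩
    have hy : a⁻¹ x ∉ K := by
      intro hc
      exact hx (Finset.mem_image.mpr ⟨a⁻¹ x, hc, a.apply_symm_apply x⟩)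
    obtain ⟨e1, e2⟩ := hK _ hy
    rw [show a (a⁻¹ x) = x from a.apply_symm_apply x] at e1 e2
    refine ⟨e1.symm, ?_⟩
    rw [← e1] at e2
    rw [Pi.neg_apply]
    omega

/-- The subgroup of finitely supported permutations of `X_n`. -/
def FSymSub (n : ℕ) : Subgroup (Equiv.Perm (XH n)) where
  carrier := {g | {x | g x ≠ x}.Finite}
  one_mem' := by simp
  mul_mem' := by
    intro a b ha hb
    apply Set.Finite.subset (ha.union hb)
    intro x hx
    by_cases h : b x = x
    · left
      show a x ≠ x
      simpa [Equiv.Perm.mul_apply, h] using hx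
    · right; exact h
  inv_mem' := by
    intro a ha
    apply Set.Finite.subset ha
    intro x hx
    show a x ≠ x
    intro hc
    apply hx
    show a⁻¹ x = x
    conv_lhs => rw [← hc]
    exact a.symm_apply_apply x

/-- The subgroup of finitely supported even permutations of `X_n`:
products of an even number of transpositions. -/
def FAltSub (n : ℕ) : Subgroup (Equiv.Perm (XH n)) where
  carrier := {g | ∃ l : List (Equiv.Perm (XH n)),
    (∀ τ ∈ l, τ.IsSwap) ∧ Even l.length ∧ l.prod = g}
  one_mem' := ⟨[], by simp, by simp, by simp⟩
  mul_mem' := by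
    rintro a b ⟨la, hla, hea, rfl⟩ ⟨lb, hlb, heb, rfl⟩
    refine ⟨la ++ lb, ?_, ?_, List.prod_append⟩
    · intro τ hτ
      rcases List.mem_append.mp hτ with h | h
      exacts [hla τ h, hlb τ h]
    · simpa using hea.add heb
  inv_mem' := by
    rintro a ⟨l, hl, he, rfl⟩
    refine ⟨(l.map fun x => x⁻¹).reverse, ?_, by simpa using he,
      (List.prod_inv_reverse l).symm⟩
    intro τ hτ
    rw [List.mem_reverse, List.mem_map] at hτ
    obtain ⟨σ, hσ, rfl⟩ := hτ
    obtain ⟨x, y, hxy, rfl⟩ := hl σ hσ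
    exact ⟨x, y, hxy, by rw [Equiv.swap_inv]⟩

/-- `FSym_n` and `FAlt_n` viewed as subgroups of `H_n`. -/
def FSymIn (n : ℕ) : Subgroup (Houghton n) := (FSymSub n).comap (Houghton n).subtype

def FAltIn (n : ℕ) : Subgroup (Houghton n) := (FAltSub n).comap (Houghton n).subtype

/-- The index of the first ray `R_1`. -/
def ray0 (n : ℕ) (hn : 0 < n) : Fin n := ⟨0, hn⟩

/-- The underlying function of the generator `g_i`. -/
def gFun (n : ℕ) (hn : 0 < n) (i : Fin n) : XH n → XH n := fun x =>
  if x.1 = ray0 n hn then (if x.2 = 0 then (i, 0) else (ray0 n hn, x.2 - 1))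
  else if x.1 = i then (i, x.2 + 1) else x

/-- The inverse of `gFun`. -/
def gInvFun (n : ℕ) (hn : 0 < n) (i : Fin n) : XH n → XH n := fun x =>
  if x.1 = i then (if x.2 = 0 then (ray0 n hn, 0) else (i, x.2 - 1))
  else if x.1 = ray0 n hn then (ray0 n hn, x.2 + 1) else x

/-- The generator `g_i` of `H_n` (as a permutation): it translates the first ray
down by one, sends `(1,1)` to `(i,1)` and translates the ray `R_i` up by one. -/
def gGen (n : ℕ) (hn : 0 < n) (i : Fin n) (hi : i ≠ ray0 n hn) : Equiv.Perm (XH n) where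
  toFun := gFun n hn i
  invFun := gInvFun n hn i
  left_inv := by
    rintro ⟨j, p⟩
    show gInvFun n hn i (gFun n hn i (j, p)) = (j, p)
    simp only [gFun, gInvFun]
    split_ifs <;> simp_all [Prod.ext_iff] <;> omega
  right_inv := by
    rintro ⟨j, p⟩
    show gFun n hn i (gInvFun n hn i (j, p)) = (j, p)
    simp only [gFun, gInvFun]
    split_ifs <;> simp_all [Prod.ext_iff] <;> omega

/-- The translation vector of `g_i`. -/
def gVec (n : ℕ) (hn : 0 < n) (i : Fin n) : Fin n → ℤ :=
  fun j => if j = ray0 n hn then -1 else if j = i then 1 else 0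

theorem gGen_mem (n : ℕ) (hn : 0 < n) (i : Fin n) (hi : i ≠ ray0 n hn) :
    gGen n hn i hi ∈ Houghton n := by
  refine ⟨gVec n hn i, {(ray0 n hn, 0)}, ?_⟩
  rintro ⟨j, p⟩ hx
  rw [Finset.mem_singleton] at hx
  have hx' : j ≠ ray0 n hn ∨ p ≠ 0 := by
    by_contra h
    push_neg at h
    exact hx (by rw [h.1, h.2])
  show (gFun n hn i (j, p)).1 = j ∧ ((gFun n hn i (j, p)).2 : ℤ) = (p : ℤ) + gVec n hn i j
  simp only [gFun, gVec]
  split_ifs <;> simp_all [Prod.ext_iff] <;> omega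

/-- The generator `g_i` as an element of `H_n`. -/
def hGen (n : ℕ) (hn : 0 < n) (i : Fin n) (hi : i ≠ ray0 n hn) : Houghton n :=
  ⟨gGen n hn i hi, gGen_mem n hn i hi⟩

/-- The transposition `α` exchanging `(1,1)` and `(1,2)`. -/
def alphaPerm (n : ℕ) (hn : 0 < n) : Equiv.Perm (XH n) :=
  Equiv.swap (ray0 n hn, 0) (ray0 n hn, 1)

theorem alphaPerm_mem (n : ℕ) (hn : 0 < n) : alphaPerm n hn ∈ Houghton n := by
  refine ⟨0, {(ray0 n hn, 0), (ray0 n hn, 1)}, ?_⟩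
  intro x hx
  simp only [Finset.mem_insert, Finset.mem_singleton, not_or] at hx
  rw [show alphaPerm n hn x = x from Equiv.swap_apply_of_ne_of_ne hx.1 hx.2]
  simp

/-- `α` as an element of `H_n`. -/
def hAlpha (n : ℕ) (hn : 0 < n) : Houghton n := ⟨alphaPerm n hn, alphaPerm_mem n hn⟩

theorem alphaPerm_mem_FSym (n : ℕ) (hn : 0 < n) : alphaPerm n hn ∈ FSymSub n := by
  show {x | alphaPerm n hn x ≠ x}.Finite
  apply Set.Finite.subset ((Set.finite_singleton (ray0 n hn, 1)).insert (ray0 n hn, 0))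
  intro x hx
  by_contra hc
  simp only [Set.mem_insert_iff, Set.mem_singleton_iff, not_or] at hc
  exact hx (Equiv.swap_apply_of_ne_of_ne hc.1 hc.2)

theorem swap_mem_houghton {n : ℕ} (P Q : XH n) : Equiv.swap P Q ∈ Houghton n := by
  classical
  refine ⟨0, {P, Q}, ?_⟩
  intro x hx
  simp only [Finset.mem_insert, Finset.mem_singleton, not_or] at hx
  rw [Equiv.swap_apply_of_ne_of_ne hx.1 hx.2]
  simp

/-- The transposition exchanging two points, as an element of `H_n`. -/
def hSwap {n : ℕ} (P Q : XH n) : Houghton n := ⟨Equiv.swap P Q, swap_mem_houghton P Q⟩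

/-- The set of generators `{g_2, …, g_n}` of `H_n`. -/
def houghtonGensOnly (n : ℕ) (hn : 0 < n) : Set (Houghton n) :=
  {x | ∃ (i : Fin n) (hi : i ≠ ray0 n hn), x = hGen n hn i hi}

/-- The chosen generating set of `H_n`: `{g_2, …, g_n}` for `n ≠ 2`,
and `{g_2, α}` for `n = 2`. -/
def houghtonGenSet (n : ℕ) (hn : 0 < n) : Set (Houghton n) :=
  if n = 2 then houghtonGensOnly n hn ∪ {hAlpha n hn} else houghtonGensOnly n hn

/-- Word length with respect to a set of generators (and their inverses). -/
noncomputable def wordLength {G : Type*} [Group G] (S : Set G) (g : G) : ℕ :=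
  sInf {k | ∃ l : List G, (∀ x ∈ l, x ∈ S ∨ x⁻¹ ∈ S) ∧ l.length = k ∧ l.prod = g}

/-- The growth rate of an endomorphism `φ`:
`GR(φ) = sup_g limsup_k |φ^k(g)|^{1/k}`. -/
noncomputable def growthRate {G : Type*} [Group G] (S : Set G) (φ : G →* G) : ℝ :=
  ⨆ g : G, Filter.limsup
    (fun k : ℕ => (wordLength S ((⇑φ)^[k] g) : ℝ) ^ (1 / (k : ℝ))) Filter.atTop

/-- The orbit of `x` under the permutation `h`. -/
def permOrbit {α : Type*} (h : Equiv.Perm α) (x : α) : Set α :=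
  Set.range (fun k : ℤ => (h ^ k) x)

/-- `x` has infinite orbit under `h` (`x` is an essential point of `h`). -/
def InfiniteOrbit {α : Type*} (h : Equiv.Perm α) (x : α) : Prop :=
  (permOrbit h x).Infinite

/-- The image `φ(g_i)` as a permutation of `X_n`. -/
def imageGen {n : ℕ} (h0 : 0 < n) (φ : Houghton n →* Houghton n)
    (i : Fin n) (hi : i ≠ ray0 n h0) : Equiv.Perm (XH n) :=
  ↑(φ (hGen n h0 i hi))

/-- The image `φ(α)` as a permutation of `X_n`. -/
def imageAlpha {n : ℕ} (h0 : 0 < n) (φ : Houghton n →* Houghton n) : Equiv.Perm (XH n) :=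
  ↑(φ (hAlpha n h0))

/-- A transposition-orbit of an involution: a pair `{x, h x}` with `h x ≠ x`. -/
def TOrbit {Ω : Type*} (h : Equiv.Perm Ω) (T : Set Ω) : Prop :=
  ∃ x, h x ≠ x ∧ T = {x, h x}

/-- The zero-sum vectors in `ℤ^n`. -/
def zeroSum (n : ℕ) : AddSubgroup (Fin n → ℤ) where
  carrier := {m | ∑ j, m j = 0}
  zero_mem' := by simp
  add_mem' := by
    intro a b ha hb
    simp only [Set.mem_setOf_eq] at *
    simp [Finset.sum_add_distrib, ha, hb]
  neg_mem' := by
    intro a ha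
    simp only [Set.mem_setOf_eq] at *
    simp [ha]

/-!
The kernel `K` of `φ` is normalised by every transposition. If `f ∈ K` moves a point, commutators of
`f` with transpositions produce a 3-cycle in `K`, and conjugating it shows that `K` contains every
product of two transpositions, that is `FAlt_n ≤ K`; so `φ` takes at most two values on `FSym_n`.
On the other hand translation vectors take values in a torsion-free group, in which the image of a
transposition under any homomorphism is trivial; so `φ` maps `FSym_n` into itself.

Write `ḡ` for the class of `g` in `H_n/FSym_n`. Since `φ` is finite-valued on `FSym_n`, there are
constants with `|φ(g)| ≤ M |ḡ| + c`, and the lengths along the orbit of `g` under `φ` are controlled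
by those along the orbit of `ḡ` under `φ̄`. Hence `GR(φ) = max 1 (GR(φ̄))`, unless `φ` is eventually
trivial, in which case `GR(φ) = GR(φ̄) = 0`. If `φ'` is nontrivial, then `φ` fixes the common value
it takes on the odd permutations, so it is not eventually trivial; if `φ'` is trivial, then `φ²`
kills `FSym_n`, so `φ` is eventually trivial as soon as `φ̄` is.
-/

open Filter Topology

/-! ### Word length -/

section WordLength

variable {G H : Type*} [Group G] [Group H] {S : Set G} {T : Set H}

theorem wordLength_list_prod_le {l : List G} (hl : ∀ x ∈ l, x ∈ S ∨ x⁻¹ ∈ S) :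
    wordLength S l.prod ≤ l.length :=
  Nat.sInf_le ⟨l, hl, rfl, rfl⟩

theorem exists_list_prod_eq_of_mem_closure {g : G} (hg : g ∈ Subgroup.closure S) :
    ∃ l : List G, (∀ x ∈ l, x ∈ S ∨ x⁻¹ ∈ S) ∧ l.prod = g := by
  rw [← Subgroup.mem_toSubmonoid, Subgroup.closure_toSubmonoid] at hg
  exact Submonoid.exists_list_of_mem_closure hg

theorem exists_list_length_eq_wordLength (hS : Subgroup.closure S = ⊤) (g : G) :
    ∃ l : List G, (∀ x ∈ l, x ∈ S ∨ x⁻¹ ∈ S) ∧ l.length = wordLength S g ∧ l.prod = g := by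
  obtain ⟨l, hl, hprod⟩ := exists_list_prod_eq_of_mem_closure (hS ▸ Subgroup.mem_top g)
  have hne : {k | ∃ l : List G, (∀ x ∈ l, x ∈ S ∨ x⁻¹ ∈ S) ∧ l.length = k ∧ l.prod = g}.Nonempty :=
    ⟨l.length, l, hl, rfl, hprod⟩
  exact Nat.sInf_mem hne

@[simp]
theorem wordLength_one : wordLength S (1 : G) = 0 := by
  simpa using wordLength_list_prod_le (S := S) (l := []) (by simp)

theorem wordLength_mul_le (hS : Subgroup.closure S = ⊤) (g h : G) :
    wordLength S (g * h) ≤ wordLength S g + wordLength S h := by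
  obtain ⟨l, hl, hlen, rfl⟩ := exists_list_length_eq_wordLength hS g
  obtain ⟨l', hl', hlen', rfl⟩ := exists_list_length_eq_wordLength hS h
  rw [← hlen, ← hlen', ← List.prod_append, ← List.length_append]
  exact wordLength_list_prod_le fun x hx => (List.mem_append.mp hx).elim (hl x) (hl' x)

theorem wordLength_eq_zero_iff (hS : Subgroup.closure S = ⊤) {g : G} :
    wordLength S g = 0 ↔ g = 1 := by
  refine ⟨fun h => ?_, fun h => h ▸ wordLength_one⟩
  obtain ⟨l, -, hlen, rfl⟩ := exists_list_length_eq_wordLength hS g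
  rw [h, List.length_eq_zero_iff] at hlen
  rw [hlen, List.prod_nil]

theorem wordLength_inv_le (hS : Subgroup.closure S = ⊤) (g : G) :
    wordLength S g⁻¹ ≤ wordLength S g := by
  obtain ⟨l, hl, hlen, rfl⟩ := exists_list_length_eq_wordLength hS g
  rw [← hlen, List.prod_inv_reverse]
  refine (wordLength_list_prod_le fun x hx => ?_).trans (by simp)
  simpa using (hl x⁻¹ (by simpa using hx)).symm

theorem wordLength_map_le (hS : Subgroup.closure S = ⊤) (hT : Subgroup.closure T = ⊤)
    (φ : G →* H) {M : ℕ} (hM : ∀ s ∈ S, wordLength T (φ s) ≤ M) (g : G) :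
    wordLength T (φ g) ≤ M * wordLength S g := by
  obtain ⟨l, hl, hlen, rfl⟩ := exists_list_length_eq_wordLength hS g
  rw [← hlen]
  clear hlen
  induction l with
  | nil => simp
  | cons a l ih =>
    rw [List.forall_mem_cons] at hl
    have ha : wordLength T (φ a) ≤ M := by
      refine hl.1.elim (hM a) fun h => ?_
      simpa using (wordLength_inv_le hT (φ a⁻¹)).trans (hM _ h)
    calc wordLength T (φ (a :: l).prod)
        ≤ wordLength T (φ a) + wordLength T (φ l.prod) := by
          rw [List.prod_cons, map_mul]
          exact wordLength_mul_le hT _ _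
      _ ≤ M + M * l.length := Nat.add_le_add ha (ih hl.2)
      _ = M * (a :: l).length := by rw [List.length_cons]; ring

theorem exists_wordLength_map_le (hS : Subgroup.closure S = ⊤) (hfin : S.Finite)
    (hT : Subgroup.closure T = ⊤) (φ : G →* H) :
    ∃ M : ℕ, ∀ g, wordLength T (φ g) ≤ M * wordLength S g := by
  obtain ⟨M, hM⟩ := (hfin.image fun s => wordLength T (φ s)).bddAbove
  exact ⟨M, wordLength_map_le hS hT φ fun s hs => hM ⟨s, hs, rfl⟩⟩

theorem closure_image_eq_top (hS : Subgroup.closure S = ⊤) {π : G →* H}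
    (hπ : Function.Surjective π) : Subgroup.closure (π '' S) = ⊤ := by
  rw [← MonoidHom.map_closure, hS, Subgroup.map_top_of_surjective π hπ]

theorem wordLength_image_map_le (hS : Subgroup.closure S = ⊤) {π : G →* H}
    (hπ : Function.Surjective π) (g : G) : wordLength (π '' S) (π g) ≤ wordLength S g := by
  have hgen : ∀ s ∈ S, wordLength (π '' S) (π s) ≤ 1 := fun s hs => by
    have hπs : ∀ x ∈ [π s], x ∈ π '' S ∨ x⁻¹ ∈ π '' S :=
      List.forall_mem_singleton.mpr (Or.inl ⟨s, hs, rfl⟩)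
    simpa using wordLength_list_prod_le hπs
  simpa using wordLength_map_le hS (closure_image_eq_top hS hπ) π hgen g

theorem exists_map_eq_wordLength_le (hS : Subgroup.closure S = ⊤) {π : G →* H}
    (hπ : Function.Surjective π) (q : H) :
    ∃ g, π g = q ∧ wordLength S g ≤ wordLength (π '' S) q := by
  obtain ⟨l, hl, hlen, rfl⟩ :=
    exists_list_length_eq_wordLength (closure_image_eq_top hS hπ) q
  have lift : ∀ y ∈ l, ∃ x, (x ∈ S ∨ x⁻¹ ∈ S) ∧ π x = y := by
    intro y hy
    rcases hl y hy with ⟨x, hx, rfl⟩ | ⟨x, hx, hxy⟩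
    · exact ⟨x, Or.inl hx, rfl⟩
    · exact ⟨x⁻¹, Or.inr (by rwa [inv_inv]), by rw [map_inv, hxy, inv_inv]⟩
  choose! s hs hsπ using lift
  refine ⟨(l.map s).prod, ?_, ?_⟩
  · rw [map_list_prod, List.map_map, List.map_congr_left (f := π ∘ s) (g := id) hsπ, List.map_id]
  · rw [← hlen, ← l.length_map s]
    exact wordLength_list_prod_le (List.forall_mem_map.mpr hs)

/-- Each `g` factors as a shortest lift of `π g` times an element of the kernel, and `φ` has
bounded length on the latter. -/
theorem exists_wordLength_map_le_of_finite_image_ker {K : Type*} [Group K] {U : Set K}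
    (hS : Subgroup.closure S = ⊤) (hfin : S.Finite) (hU : Subgroup.closure U = ⊤) {π : G →* H}
    (hπ : Function.Surjective π) {φ : G →* K} (hφ : (φ '' π.ker).Finite) :
    ∃ M c : ℕ, ∀ g, wordLength U (φ g) ≤ M * wordLength (π '' S) (π g) + c := by
  obtain ⟨M, hM⟩ := exists_wordLength_map_le hS hfin hU φ
  obtain ⟨c, hc⟩ := (hφ.image (wordLength U)).bddAbove
  refine ⟨M, c, fun g => ?_⟩
  obtain ⟨w, hwg, hw⟩ := exists_map_eq_wordLength_le hS hπ (π g)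
  have hker : w⁻¹ * g ∈ π.ker := by
    rw [MonoidHom.mem_ker, map_mul, map_inv, hwg, inv_mul_cancel]
  calc wordLength U (φ g) = wordLength U (φ w * φ (w⁻¹ * g)) := by
        rw [← map_mul, mul_inv_cancel_left]
    _ ≤ wordLength U (φ w) + wordLength U (φ (w⁻¹ * g)) := wordLength_mul_le hU _ _
    _ ≤ M * wordLength (π '' S) (π g) + c :=
      Nat.add_le_add ((hM w).trans (Nat.mul_le_mul_left M hw))
        (hc ⟨_, ⟨_, hker, rfl⟩, rfl⟩)

end WordLength

/-! ### Exponential growth of sequences -/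

/-- The exponential growth rate `limsup (a k) ^ (1 / k)` of a sequence of lengths; it is the
quantity whose supremum over the group is `growthRate`. As a real `limsup`, it is only meaningful
if the roots `(a k) ^ (1 / k)` are bounded. -/
noncomputable def rootGrowth (a : ℕ → ℕ) : ℝ :=
  limsup (fun k : ℕ => (a k : ℝ) ^ (1 / (k : ℝ))) atTop

section RootGrowth

variable {a b : ℕ → ℕ} {C L : ℝ}

theorem exists_tendsto_root_le (hL : 0 ≤ L) (h : ∀ᶠ k in atTop, (a k : ℝ) ≤ C * L ^ k) :
    ∃ u : ℕ → ℝ, Tendsto u atTop (𝓝 L) ∧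
      ∀ᶠ k : ℕ in atTop, (a k : ℝ) ^ (1 / (k : ℝ)) ≤ u k := by
  have hC : 0 < max C 1 := lt_max_of_lt_right one_pos
  refine ⟨fun k => max C 1 ^ (1 / (k : ℝ)) * L, ?_, ?_⟩
  · simpa using (tendsto_const_nhds.rpow tendsto_one_div_atTop_nhds_zero_nat
      (Or.inl hC.ne')).mul_const L
  · filter_upwards [h, eventually_ne_atTop 0] with k hk hk0
    calc (a k : ℝ) ^ (1 / (k : ℝ)) ≤ (max C 1 * L ^ k) ^ (1 / (k : ℝ)) := by
          gcongr
          exact hk.trans (by gcongr; exact le_max_left _ _)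
      _ = max C 1 ^ (1 / (k : ℝ)) * L := by
          rw [Real.mul_rpow hC.le (by positivity), one_div, Real.pow_rpow_inv_natCast hL hk0]

theorem isBoundedUnder_root (hL : 0 ≤ L) (h : ∀ᶠ k in atTop, (a k : ℝ) ≤ C * L ^ k) :
    IsBoundedUnder (· ≤ ·) atTop fun k : ℕ => (a k : ℝ) ^ (1 / (k : ℝ)) :=
  let ⟨_, hu, hle⟩ := exists_tendsto_root_le hL h
  hu.isBoundedUnder_le.mono_le hle

theorem isCoboundedUnder_root (a : ℕ → ℕ) :
    IsCoboundedUnder (· ≤ ·) atTop fun k : ℕ => (a k : ℝ) ^ (1 / (k : ℝ)) :=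
  (isBoundedUnder_of ⟨0, fun _ => by positivity⟩ :
    IsBoundedUnder (· ≥ ·) atTop _).isCoboundedUnder_le

theorem rootGrowth_le (hL : 0 ≤ L) (h : ∀ᶠ k in atTop, (a k : ℝ) ≤ C * L ^ k) :
    rootGrowth a ≤ L :=
  let ⟨_, hu, hle⟩ := exists_tendsto_root_le hL h
  (limsup_le_limsup hle (isCoboundedUnder_root a) hu.isBoundedUnder_le).trans_eq hu.limsup_eq

theorem eventually_le_pow_of_rootGrowth_lt
    (ha : IsBoundedUnder (· ≤ ·) atTop fun k : ℕ => (a k : ℝ) ^ (1 / (k : ℝ)))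
    (h : rootGrowth a < L) : ∀ᶠ k in atTop, (a k : ℝ) ≤ L ^ k := by
  filter_upwards [eventually_lt_of_limsup_lt h ha, eventually_ne_atTop 0] with k hk hk0
  calc (a k : ℝ) = ((a k : ℝ) ^ (1 / (k : ℝ))) ^ k := by
        rw [one_div, Real.rpow_inv_natCast_pow (Nat.cast_nonneg _) hk0]
    _ ≤ L ^ k := by gcongr

theorem rootGrowth_mono
    (hb : IsBoundedUnder (· ≤ ·) atTop fun k : ℕ => (b k : ℝ) ^ (1 / (k : ℝ)))
    (h : ∀ k, a k ≤ b k) : rootGrowth a ≤ rootGrowth b := by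
  refine limsup_le_limsup (Eventually.of_forall fun k => ?_) (isCoboundedUnder_root a) hb
  have := h k
  dsimp only
  gcongr

theorem one_le_rootGrowth
    (ha : IsBoundedUnder (· ≤ ·) atTop fun k : ℕ => (a k : ℝ) ^ (1 / (k : ℝ)))
    (h : ∀ k, a k ≠ 0) : 1 ≤ rootGrowth a :=
  le_limsup_of_frequently_le (Frequently.of_forall fun k =>
    Real.one_le_rpow (Nat.one_le_cast.mpr (Nat.one_le_iff_ne_zero.mpr (h k))) (by positivity)) ha

theorem rootGrowth_eq_zero (h : ∀ᶠ k in atTop, a k = 0) : rootGrowth a = 0 := by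
  refine (limsup_congr ?_).trans (limsup_const (0 : ℝ))
  filter_upwards [h, eventually_ne_atTop 0] with k hk hk0
  rw [hk, Nat.cast_zero, Real.zero_rpow (by positivity)]

end RootGrowth

/-! ### Growth rates of endomorphisms -/

/-- Some positive iterate of `φ` is the trivial endomorphism. -/
def IsEventuallyTrivial {G : Type*} [Group G] (φ : G →* G) : Prop :=
  ∃ k : ℕ, 1 ≤ k ∧ ∀ x, (⇑φ)^[k] x = 1

section EventuallyTrivial

variable {G Q : Type*} [Group G] [Group Q] {φ : G →* G}

theorem iterate_map_eq_one_of_le {g : G} {k m : ℕ} (hkm : k ≤ m) (h : (⇑φ)^[k] g = 1) :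
    (⇑φ)^[m] g = 1 := by
  rw [← Nat.sub_add_cancel hkm, Function.iterate_add_apply, h, iterate_map_one]

theorem IsEventuallyTrivial.of_semiconj (hφ : IsEventuallyTrivial φ) {ψ : Q →* Q} {π : G →* Q}
    (hπ : Function.Surjective π) (h : Function.Semiconj π φ ψ) : IsEventuallyTrivial ψ := by
  obtain ⟨k, hk, hφk⟩ := hφ
  refine ⟨k, hk, hπ.forall.mpr fun g => ?_⟩
  rw [← (h.iterate_right k).eq, hφk, map_one]

theorem isEventuallyTrivial_of_forall_exists {S : Set G} (hS : Subgroup.closure S = ⊤)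
    (hfin : S.Finite) (h : ∀ g, ∃ k, (⇑φ)^[k] g = 1) : IsEventuallyTrivial φ := by
  choose K hK using h
  obtain ⟨B, hB⟩ := (hfin.image K).bddAbove
  refine ⟨B + 1, B.succ_pos, fun x => ?_⟩
  have hx : x ∈ Subgroup.closure S := hS ▸ Subgroup.mem_top x
  induction hx using Subgroup.closure_induction with
  | mem s hs => exact iterate_map_eq_one_of_le (Nat.le_succ_of_le (hB ⟨s, hs, rfl⟩)) (hK s)
  | one => exact iterate_map_one φ _
  | mul x y _ _ hx hy => rw [iterate_map_mul, hx, hy, one_mul]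
  | inv x _ hx => rw [iterate_map_inv, hx, inv_one]

end EventuallyTrivial

section GrowthRate

variable {G Q : Type*} [Group G] [Group Q] {S : Set G}

theorem growthRate_eq_iSup_rootGrowth (S : Set G) (φ : G →* G) :
    growthRate S φ = ⨆ g, rootGrowth fun k => wordLength S ((⇑φ)^[k] g) :=
  rfl

theorem exists_wordLength_iterate_le (hS : Subgroup.closure S = ⊤) (hfin : S.Finite)
    (φ : G →* G) : ∃ M : ℝ, 0 ≤ M ∧ ∀ g (k : ℕ),
      (wordLength S ((⇑φ)^[k] g) : ℝ) ≤ wordLength S g * M ^ k := by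
  obtain ⟨M, hM⟩ := exists_wordLength_map_le hS hfin hS φ
  refine ⟨M, M.cast_nonneg, fun g k => ?_⟩
  induction k with
  | zero => simp
  | succ k ih =>
    calc (wordLength S ((⇑φ)^[k + 1] g) : ℝ) ≤ M * wordLength S ((⇑φ)^[k] g) := by
          rw [Function.iterate_succ_apply']
          exact_mod_cast hM _
      _ ≤ M * (wordLength S g * M ^ k) := by gcongr
      _ = wordLength S g * M ^ (k + 1) := by ring

theorem isBoundedUnder_root_wordLength (hS : Subgroup.closure S = ⊤) (hfin : S.Finite)
    (φ : G →* G) (g : G) : IsBoundedUnder (· ≤ ·) atTop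
      fun k : ℕ => (wordLength S ((⇑φ)^[k] g) : ℝ) ^ (1 / (k : ℝ)) :=
  let ⟨_, hM, h⟩ := exists_wordLength_iterate_le hS hfin φ
  isBoundedUnder_root hM (Eventually.of_forall (h g))

theorem rootGrowth_le_growthRate (hS : Subgroup.closure S = ⊤) (hfin : S.Finite) (φ : G →* G)
    (g : G) : rootGrowth (fun k => wordLength S ((⇑φ)^[k] g)) ≤ growthRate S φ := by
  obtain ⟨M, hM, h⟩ := exists_wordLength_iterate_le hS hfin φ
  have hbdd : BddAbove (Set.range fun g => rootGrowth fun k => wordLength S ((⇑φ)^[k] g)) :=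
    ⟨M, Set.forall_mem_range.mpr fun g => rootGrowth_le hM (Eventually.of_forall (h g))⟩
  exact le_ciSup hbdd g

theorem IsEventuallyTrivial.growthRate_eq_zero {φ : G →* G} (hφ : IsEventuallyTrivial φ) :
    growthRate S φ = 0 := by
  obtain ⟨k, -, hk⟩ := hφ
  have hzero : ∀ g, rootGrowth (fun m => wordLength S ((⇑φ)^[m] g)) = 0 := fun g =>
    rootGrowth_eq_zero <| (eventually_ge_atTop k).mono fun m hm => by
      rw [iterate_map_eq_one_of_le hm (hk g), wordLength_one]
  simp [growthRate_eq_iSup_rootGrowth, hzero]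

theorem one_le_growthRate (hS : Subgroup.closure S = ⊤) (hfin : S.Finite) {φ : G →* G}
    (hφ : ¬ IsEventuallyTrivial φ) : 1 ≤ growthRate S φ := by
  obtain ⟨g, hg⟩ : ∃ g, ∀ k, (⇑φ)^[k] g ≠ 1 := by
    by_contra! hcon
    exact hφ (isEventuallyTrivial_of_forall_exists hS hfin hcon)
  exact (one_le_rootGrowth (isBoundedUnder_root_wordLength hS hfin φ g) fun k =>
    (wordLength_eq_zero_iff hS).not.mpr (hg k)).trans (rootGrowth_le_growthRate hS hfin φ g)

variable {φ : G →* G} {ψ : Q →* Q} {π : G →* Q}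

theorem growthRate_le_of_semiconj (hS : Subgroup.closure S = ⊤) (hfin : S.Finite)
    (hπ : Function.Surjective π) (h : Function.Semiconj π φ ψ) :
    growthRate (π '' S) ψ ≤ growthRate S φ := by
  refine ciSup_le (hπ.forall.mpr fun g => ?_)
  refine le_trans (rootGrowth_mono (isBoundedUnder_root_wordLength hS hfin φ g) fun k => ?_)
    (rootGrowth_le_growthRate hS hfin φ g)
  rw [← (h.iterate_right k).eq]
  exact wordLength_image_map_le hS hπ _

theorem growthRate_le_max_one (hS : Subgroup.closure S = ⊤) (hfin : S.Finite)
    (hπ : Function.Surjective π) (h : Function.Semiconj π φ ψ) (hφ : (φ '' π.ker).Finite) :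
    growthRate S φ ≤ max 1 (growthRate (π '' S) ψ) := by
  obtain ⟨M, c, hMc⟩ := exists_wordLength_map_le_of_finite_image_ker hS hfin hS hπ hφ
  refine ciSup_le fun g => le_of_forall_gt_imp_ge_of_dense fun L hL => ?_
  obtain ⟨hL1, hL⟩ := max_lt_iff.mp hL
  have hT := closure_image_eq_top hS hπ
  have hψ : ∀ᶠ k in atTop, (wordLength (π '' S) ((⇑ψ)^[k] (π g)) : ℝ) ≤ L ^ k :=
    eventually_le_pow_of_rootGrowth_lt
      (isBoundedUnder_root_wordLength hT (hfin.image π) ψ (π g))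
      ((rootGrowth_le_growthRate hT (hfin.image π) ψ (π g)).trans_lt hL)
  refine rootGrowth_le (C := M + c) (by positivity) ?_
  rw [← map_add_atTop_eq_nat 1, eventually_map]
  filter_upwards [hψ] with k hk
  have hone : 1 ≤ L ^ k := one_le_pow₀ hL1.le
  calc (wordLength S ((⇑φ)^[k + 1] g) : ℝ)
      ≤ M * wordLength (π '' S) ((⇑ψ)^[k] (π g)) + c := by
        rw [Function.iterate_succ_apply', ← (h.iterate_right k).eq]
        exact_mod_cast hMc _
    _ ≤ M * L ^ k + c * L ^ k := by
        gcongr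
        exact le_mul_of_one_le_right c.cast_nonneg hone
    _ = (M + c) * L ^ k := by ring
    _ ≤ (M + c) * L ^ (k + 1) := by
        gcongr
        · exact hL1.le
        · exact k.le_succ

theorem growthRate_eq_max_one (hS : Subgroup.closure S = ⊤) (hfin : S.Finite)
    (hπ : Function.Surjective π) (h : Function.Semiconj π φ ψ) (hker : (φ '' π.ker).Finite)
    (hφ : ¬ IsEventuallyTrivial φ) : growthRate S φ = max 1 (growthRate (π '' S) ψ) :=
  le_antisymm (growthRate_le_max_one hS hfin hπ h hker)
    (max_le (one_le_growthRate hS hfin hφ) (growthRate_le_of_semiconj hS hfin hπ h))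

theorem growthRate_eq_of_not_isEventuallyTrivial (hS : Subgroup.closure S = ⊤) (hfin : S.Finite)
    (hπ : Function.Surjective π) (h : Function.Semiconj π φ ψ) (hker : (φ '' π.ker).Finite)
    (hψ : ¬ IsEventuallyTrivial ψ) : growthRate S φ = growthRate (π '' S) ψ := by
  rw [growthRate_eq_max_one hS hfin hπ h hker fun hφ => hψ (hφ.of_semiconj hπ h)]
  exact max_eq_right (one_le_growthRate (closure_image_eq_top hS hπ) (hfin.image π) hψ)

end GrowthRate

/-! ### Subgroups of permutations and transpositions -/

theorem list_prod_mem_of_even_length {M : Type*} [Monoid M] {s : Set M} {K : Submonoid M}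
    (h : ∀ σ ∈ s, ∀ τ ∈ s, σ * τ ∈ K) :
    ∀ {l : List M}, (∀ σ ∈ l, σ ∈ s) → Even l.length → l.prod ∈ K
  | [], _, _ => K.one_mem
  | [_], _, he => by simp at he
  | σ :: τ :: l, hl, he => by
    simp only [List.forall_mem_cons] at hl
    rw [List.prod_cons, List.prod_cons, ← mul_assoc]
    refine K.mul_mem (h σ hl.1 τ hl.2.1) (list_prod_mem_of_even_length h hl.2.2 ?_)
    simpa [Nat.even_add_one] using he

section Transpositions

variable {α : Type*} [DecidableEq α] {K U : Subgroup (Equiv.Perm α)} {f g : Equiv.Perm α}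

theorem exists_mem_forall_mem_apply_eq (hU : ∀ a b, Equiv.swap a b ∈ U) {ι : Type*}
    {v w : ι → α} (s : Finset ι) (hv : Set.InjOn v s) (hw : Set.InjOn w s) :
    ∃ u ∈ U, ∀ i ∈ s, u (v i) = w i := by
  classical
  induction s using Finset.induction_on with
  | empty => exact ⟨1, U.one_mem, by simp⟩
  | insert i s hi ih =>
    rw [Finset.coe_insert, Set.injOn_insert (by simpa using hi)] at hv hw
    obtain ⟨u, hu, huv⟩ := ih hv.1 hw.1
    refine ⟨Equiv.swap (u (v i)) (w i) * u, U.mul_mem (hU _ _) hu, ?_⟩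
    rw [Finset.forall_mem_insert]
    refine ⟨Equiv.swap_apply_left _ _, fun j hj => ?_⟩
    rw [Equiv.Perm.mul_apply, huv j hj]
    refine Equiv.swap_apply_of_ne_of_ne (fun h => hv.2 ⟨j, hj, ?_⟩) fun h => hw.2 ⟨j, hj, h⟩
    exact u.injective ((huv j hj).trans h)

theorem swap_zpow_apply_mem (hg : g ∈ U) {x : α} (h : Equiv.swap x (g x) ∈ U) (k : ℤ) :
    Equiv.swap x ((g ^ k) x) ∈ U := by
  have hstep : ∀ k : ℤ, Equiv.swap ((g ^ k) x) ((g ^ (k + 1)) x) ∈ U := fun k => by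
    rw [zpow_add_one, Equiv.Perm.mul_apply, Equiv.swap_apply_apply]
    exact U.mul_mem (U.mul_mem (U.zpow_mem hg k) h) (U.inv_mem (U.zpow_mem hg k))
  induction k using Int.induction_on with
  | zero => simp [U.one_mem, Equiv.Perm.one_def.symm]
  | succ k ih => exact SubmonoidClass.swap_mem_trans U ih (hstep k)
  | pred k ih =>
    refine SubmonoidClass.swap_mem_trans U ih ?_
    simpa [Equiv.swap_comm] using hstep (-k - 1)

theorem swap_apply_mul_swap_mem {a b : α}
    (hab : Equiv.swap a b ∈ Subgroup.normalizer (K : Set (Equiv.Perm α))) (hf : f ∈ K) :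
    Equiv.swap (f a) (f b) * Equiv.swap a b ∈ K := by
  have hconj := (Subgroup.mem_normalizer_iff.mp hab f⁻¹).mp (K.inv_mem hf)
  rw [Equiv.swap_inv] at hconj
  simpa [Equiv.swap_apply_apply, mul_assoc] using K.mul_mem hf hconj

section Infinite

variable [Infinite α]
  (hK : ∀ a b, Equiv.swap a b ∈ Subgroup.normalizer (K : Set (Equiv.Perm α)))

include hK

theorem exists_swap_mul_swap_same_mem (hne : K ≠ ⊥) :
    ∃ a b c, a ≠ b ∧ a ≠ c ∧ b ≠ c ∧ Equiv.swap a b * Equiv.swap a c ∈ K := by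
  obtain ⟨⟨f, hf⟩, hf1⟩ := K.ne_bot_iff_exists_ne_one.mp hne
  obtain ⟨x, hx⟩ : ∃ x, f x ≠ x := by
    by_contra! h
    exact hf1 (Subtype.ext (Equiv.ext h))
  obtain ⟨y, hy⟩ := Infinite.exists_notMem_finset {x, f⁻¹ x}
  simp only [Finset.mem_insert, Finset.mem_singleton, not_or, Equiv.Perm.eq_inv_iff_eq] at hy
  obtain ⟨z, hz⟩ := Infinite.exists_notMem_finset {x, y, f x, f y}
  simp only [Finset.mem_insert, Finset.mem_singleton, not_or] at hz
  obtain ⟨c, hcK, hcx, hcz⟩ : ∃ c ∈ K, c x ≠ x ∧ c z = z := by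
    refine ⟨_, swap_apply_mul_swap_mem (hK x y) hf, ?_, ?_⟩
    · rw [Equiv.Perm.mul_apply, Equiv.swap_apply_left]
      intro h
      rw [Equiv.swap_apply_eq_iff, Equiv.swap_apply_of_ne_of_ne hx.symm (Ne.symm hy.2)] at h
      exact hy.1 h
    · rw [Equiv.Perm.mul_apply, Equiv.swap_apply_of_ne_of_ne hz.1 hz.2.1,
        Equiv.swap_apply_of_ne_of_ne hz.2.2.1 hz.2.2.2]
  have hmem := swap_apply_mul_swap_mem (hK x z) hcK
  rw [hcz, Equiv.swap_comm, Equiv.swap_comm x] at hmem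
  exact ⟨z, c x, x, fun h => hz.1 (c.injective (hcz.trans h)), hz.1, hcx, hmem⟩

theorem swap_mul_swap_same_mem (hne : K ≠ ⊥) {p q r : α} (hpq : p ≠ q) (hpr : p ≠ r) :
    Equiv.swap p q * Equiv.swap p r ∈ K := by
  obtain rfl | hqr := eq_or_ne q r
  · simp [K.one_mem]
  obtain ⟨a, b, c, hab, hac, hbc, hmem⟩ := exists_swap_mul_swap_same_mem hK hne
  have hv : Function.Injective ![a, b, c] := by
    simp [Function.Injective, Fin.forall_fin_succ, *, Ne.symm]
  have hw : Function.Injective ![p, q, r] := by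
    simp [Function.Injective, Fin.forall_fin_succ, *, Ne.symm]
  obtain ⟨u, hu, huv⟩ := exists_mem_forall_mem_apply_eq hK Finset.univ hv.injOn hw.injOn
  obtain ⟨rfl, rfl, rfl⟩ : u a = p ∧ u b = q ∧ u c = r :=
    ⟨huv 0 (Finset.mem_univ 0), huv 1 (Finset.mem_univ 1), huv 2 (Finset.mem_univ 2)⟩
  rw [Equiv.swap_apply_apply, Equiv.swap_apply_apply]
  simpa [mul_assoc] using (Subgroup.mem_normalizer_iff.mp hu _).mp hmem

theorem mul_mem_of_isSwap (hne : K ≠ ⊥) {σ τ : Equiv.Perm α} (hσ : σ.IsSwap) (hτ : τ.IsSwap) :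
    σ * τ ∈ K := by
  obtain ⟨a, b, hab, rfl⟩ := hσ
  obtain ⟨c, d, hcd, rfl⟩ := hτ
  obtain ⟨r, hr⟩ := Infinite.exists_notMem_finset {a, c}
  simp only [Finset.mem_insert, Finset.mem_singleton, not_or] at hr
  have h₁ := swap_mul_swap_same_mem hK hne hab (Ne.symm hr.1)
  have h₂ := swap_mul_swap_same_mem hK hne hr.1 hr.2
  have h₃ := swap_mul_swap_same_mem hK hne (Ne.symm hr.2) hcd
  rw [Equiv.swap_comm r a] at h₂
  rw [Equiv.swap_comm c r] at h₃
  simpa [mul_assoc] using K.mul_mem h₁ (K.mul_mem h₂ h₃)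

end Infinite

end Transpositions

/-! ### Translation vectors -/

section TranslationVector

variable {n : ℕ} {g h : Equiv.Perm (XH n)} {m m' : Fin n → ℤ}

theorem hasTranslationVector_iff_eventually :
    HasTranslationVector g m ↔
      ∀ᶠ x in cofinite, (g x).1 = x.1 ∧ ((g x).2 : ℤ) = x.2 + m x.1 := by
  rw [eventually_cofinite]
  refine ⟨fun ⟨K, hK⟩ => K.finite_toSet.subset fun x hx => by_contra fun h => hx (hK x h),
    fun h => ⟨h.toFinset, fun x hx => ?_⟩⟩
  simpa using hx

theorem mem_FSymSub_iff_hasTranslationVector_zero :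
    g ∈ FSymSub n ↔ HasTranslationVector g 0 := by
  have hset : {x | g x ≠ x} =
      {x | ¬((g x).1 = x.1 ∧ ((g x).2 : ℤ) = x.2 + (0 : Fin n → ℤ) x.1)} := by
    ext x
    simp [Prod.ext_iff]
  rw [hasTranslationVector_iff_eventually, eventually_cofinite, ← hset]
  rfl

theorem card_subtype_snd_lt (f : Fin n → ℕ) :
    Nat.card {x : XH n // x.2 < f x.1} = ∑ i, f i := by
  rw [Nat.card_congr (Equiv.subtypeProdEquivSigmaSubtype fun i p => p < f i), Nat.card_sigma]
  exact Finset.sum_congr rfl fun i _ =>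
    (Nat.card_congr Fin.equivSubtype.symm).trans (Nat.card_fin (f i))

namespace HasTranslationVector

theorem mul (hg : HasTranslationVector g m) (hh : HasTranslationVector h m') :
    HasTranslationVector (g * h) (m + m') := by
  rw [hasTranslationVector_iff_eventually] at hg hh ⊢
  filter_upwards [hh, h.injective.tendsto_cofinite.eventually hg] with x ⟨hx₁, hx₂⟩ ⟨hgx₁, hgx₂⟩
  refine ⟨hgx₁.trans hx₁, ?_⟩
  rw [Equiv.Perm.mul_apply, hgx₂, hx₁, hx₂, Pi.add_apply]
  ring

theorem unique (hg : HasTranslationVector g m) (hg' : HasTranslationVector g m') : m = m' := by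
  rw [hasTranslationVector_iff_eventually] at hg hg'
  ext i
  obtain ⟨p, hp, hp'⟩ :=
    ((Prod.mk_right_injective i).tendsto_cofinite.eventually (hg.and hg')).exists
  exact add_left_cancel (hp.2.symm.trans hp'.2)

theorem mem_FSymSub_iff (hg : HasTranslationVector g m) : g ∈ FSymSub n ↔ m = 0 := by
  rw [mem_FSymSub_iff_hasTranslationVector_zero]
  exact ⟨hg.unique, fun h => h ▸ hg⟩

theorem exists_snd_lt_iff (hg : HasTranslationVector g m) :
    ∃ N : ℕ, (∀ i, 0 ≤ N + m i) ∧ ∀ x, x.2 < N ↔ ((g x).2 : ℤ) < N + m (g x).1 := by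
  obtain ⟨K, hK⟩ := hg
  obtain ⟨N, hKN, hmN⟩ : ∃ N : ℕ, (∀ x ∈ K, x.2 < N) ∧ ∀ i, (-m i).toNat ≤ N :=
    (((eventually_all_finset K).mpr fun x _ => eventually_gt_atTop x.2).and
      (eventually_all.mpr fun i => eventually_ge_atTop _)).exists
  refine ⟨N, fun i => by have := hmN i; omega, fun x => ⟨fun hx => ?_, fun hx => ?_⟩⟩
  · by_contra! hge
    obtain ⟨p, hp⟩ := Int.eq_ofNat_of_zero_le (a := (g x).2 - m (g x).1) (by omega)
    have hout : ((g x).1, p) ∉ K := fun h => by have := hKN _ h; dsimp only at this; omega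
    obtain ⟨h₁, h₂⟩ := hK _ hout
    have hfix : g ((g x).1, p) = g x := Prod.ext h₁ (by dsimp only at h₂; omega)
    have := congrArg Prod.snd (g.injective hfix)
    dsimp only at this
    omega
  · by_contra! hge
    obtain ⟨h₁, h₂⟩ := hK x fun h => (hKN x h).not_ge hge
    rw [h₁] at hx
    omega

/-- For large `N`, `g` maps the union of the initial segments of length `N` of the rays bijectively
onto the union of the initial segments of length `N + m i`. -/
theorem sum_eq_zero (hg : HasTranslationVector g m) : ∑ i, m i = 0 := by
  obtain ⟨N, hN, hgN⟩ := hg.exists_snd_lt_iff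
  have hcard : ∑ _i : Fin n, N = ∑ i, (N + m i).toNat := by
    rw [← card_subtype_snd_lt, ← card_subtype_snd_lt]
    exact Nat.card_congr (g.subtypeEquiv fun x => (hgN x).trans Int.lt_toNat.symm)
  zify at hcard
  simpa [hN, Finset.sum_add_distrib] using hcard

end HasTranslationVector

/-- The homomorphism sending an eventual translation to its translation vector. -/
noncomputable def translationHom (n : ℕ) : Houghton n →* Multiplicative (Fin n → ℤ) :=
  MonoidHom.mk' (fun g => Multiplicative.ofAdd g.2.choose) fun g h =>
    (g * h).2.choose_spec.unique (g.2.choose_spec.mul h.2.choose_spec)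

theorem hasTranslationVector_translationHom (g : Houghton n) :
    HasTranslationVector (g : Equiv.Perm (XH n)) (translationHom n g).toAdd :=
  g.2.choose_spec

theorem ker_translationHom : (translationHom n).ker = FSymIn n :=
  Subgroup.ext fun g => (hasTranslationVector_translationHom g).mem_FSymSub_iff.symm

theorem translationHom_hGen (h0 : 0 < n) (i : Fin n) (hi : i ≠ ray0 n h0) :
    (translationHom n (hGen n h0 i hi)).toAdd = gVec n h0 i := by
  refine (hasTranslationVector_translationHom _).unique
    (hasTranslationVector_iff_eventually.mpr ?_)
  filter_upwards [(Set.finite_singleton (ray0 n h0, 0)).compl_mem_cofinite] with ⟨j, p⟩ hx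
  simp only [Set.mem_compl_iff, Set.mem_singleton_iff, Prod.mk.injEq, not_and] at hx
  change (gFun n h0 i (j, p)).1 = j ∧ ((gFun n h0 i (j, p)).2 : ℤ) = p + gVec n h0 i j
  grind [gFun, gVec]

end TranslationVector

/-! ### Generators of Houghton's group -/

section Generators

variable {n : ℕ} {h0 : 0 < n} {i j : Fin n} {V : Subgroup (Equiv.Perm (XH n))}

theorem mk_ne_ray0 {k : ℕ} (hk : k < n) (hk0 : k ≠ 0) : (⟨k, hk⟩ : Fin n) ≠ ray0 n h0 :=
  Fin.ne_of_val_ne hk0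

theorem gGen_apply_ray0_zero (hi : i ≠ ray0 n h0) : gGen n h0 i hi (ray0 n h0, 0) = (i, 0) := by
  simp [gGen, gFun]

theorem gGen_pow_apply_ray0 (hi : i ≠ ray0 n h0) (p : ℕ) :
    (gGen n h0 i hi ^ p) (ray0 n h0, p) = (ray0 n h0, 0) := by
  induction p with
  | zero => rfl
  | succ p ih =>
    rw [pow_succ, Equiv.Perm.mul_apply, ← ih]
    simp [gGen, gFun]

theorem gGen_pow_apply_zero (hi : i ≠ ray0 n h0) (p : ℕ) :
    (gGen n h0 i hi ^ p) (i, 0) = (i, p) := by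
  induction p with
  | zero => rfl
  | succ p ih =>
    rw [pow_succ', Equiv.Perm.mul_apply, ih]
    simp [gGen, gFun, hi]

theorem gGen_mul_gGen (hi : i ≠ ray0 n h0) (hj : j ≠ ray0 n h0) (hij : i ≠ j) :
    gGen n h0 i hi * gGen n h0 j hj = gGen n h0 j hj * gGen n h0 i hi * alphaPerm n h0 := by
  ext x : 1
  rw [Equiv.Perm.mul_apply, Equiv.Perm.mul_apply, Equiv.Perm.mul_apply]
  obtain ⟨k, p⟩ := x
  rw [alphaPerm, Equiv.swap_apply_def]
  change gFun n h0 i (gFun n h0 j (k, p)) = gFun n h0 j (gFun n h0 i _)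
  grind [gFun]

theorem exists_gGen_zpow_apply_eq (hn : 2 ≤ n) (x : XH n) :
    ∃ (i : Fin n) (hi : i ≠ ray0 n h0) (k : ℤ), (gGen n h0 i hi ^ k) (ray0 n h0, 0) = x := by
  obtain ⟨i, p⟩ := x
  obtain rfl | hi := eq_or_ne i (ray0 n h0)
  · refine ⟨⟨1, hn⟩, mk_ne_ray0 hn one_ne_zero, -p, ?_⟩
    rw [zpow_neg, zpow_natCast, Equiv.Perm.inv_eq_iff_eq, gGen_pow_apply_ray0]
  · refine ⟨i, hi, p + 1, ?_⟩
    rw [zpow_add_one, zpow_natCast, Equiv.Perm.mul_apply, gGen_apply_ray0_zero,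
      gGen_pow_apply_zero]

/-- Conjugating `α` by `g_i` gives the transposition of `(1, 1)` and `(i, 1)`, and the powers of
the `g_i` move `(1, 1)` to every point. -/
theorem swap_mem_of_gGen_mem (hn : 2 ≤ n) (hα : alphaPerm n h0 ∈ V)
    (hV : ∀ i hi, gGen n h0 i hi ∈ V) (x y : XH n) : Equiv.swap x y ∈ V := by
  have hbase : ∀ i hi, Equiv.swap (ray0 n h0, 0) (gGen n h0 i hi (ray0 n h0, 0)) ∈ V := by
    intro i hi
    have hone : gGen n h0 i hi (ray0 n h0, 1) = (ray0 n h0, 0) := by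
      simpa using gGen_pow_apply_ray0 hi 1
    have hconj := V.mul_mem (V.mul_mem (hV i hi) hα) (V.inv_mem (hV i hi))
    rwa [alphaPerm, ← Equiv.swap_apply_apply, hone, Equiv.swap_comm] at hconj
  have hpoint : ∀ x, Equiv.swap (ray0 n h0, 0) x ∈ V := by
    intro x
    obtain ⟨i, hi, k, rfl⟩ := exists_gGen_zpow_apply_eq (h0 := h0) hn x
    exact swap_zpow_apply_mem (hV i hi) (hbase i hi) k
  exact SubmonoidClass.swap_mem_trans V (Equiv.swap_comm _ x ▸ hpoint x) (hpoint y)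

theorem closure_isSwap_eq_FSymSub (n : ℕ) :
    Subgroup.closure {σ : Equiv.Perm (XH n) | σ.IsSwap} = FSymSub n :=
  Subgroup.ext fun _ => mem_closure_isSwap'

theorem finite_houghtonGenSet (n : ℕ) (h0 : 0 < n) : (houghtonGenSet n h0).Finite := by
  have hgens : (houghtonGensOnly n h0).Finite := by
    refine (Set.finite_range fun i : {i // i ≠ ray0 n h0} => hGen n h0 i i.2).subset ?_
    rintro _ ⟨i, hi, rfl⟩
    exact ⟨⟨i, hi⟩, rfl⟩
  unfold houghtonGenSet
  split_ifs
  exacts [hgens.union (Set.finite_singleton _), hgens]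

theorem hGen_mem_closure (i : Fin n) (hi : i ≠ ray0 n h0) :
    hGen n h0 i hi ∈ Subgroup.closure (houghtonGenSet n h0) := by
  have hmem : hGen n h0 i hi ∈ houghtonGensOnly n h0 := ⟨i, hi, rfl⟩
  refine Subgroup.subset_closure ?_
  unfold houghtonGenSet
  split_ifs
  exacts [Or.inl hmem, hmem]

theorem hAlpha_mem_closure (hn : 2 ≤ n) :
    hAlpha n h0 ∈ Subgroup.closure (houghtonGenSet n h0) := by
  obtain rfl | hn := hn.eq_or_lt
  · exact Subgroup.subset_closure (by simp [houghtonGenSet])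
  · have h₁ := mk_ne_ray0 (h0 := h0) (Nat.lt_of_succ_lt hn) one_ne_zero
    have h₂ := mk_ne_ray0 (h0 := h0) hn two_ne_zero
    have hcomm : hGen n h0 _ h₁ * hGen n h0 _ h₂ =
        hGen n h0 _ h₂ * hGen n h0 _ h₁ * hAlpha n h0 :=
      Subtype.ext (gGen_mul_gGen h₁ h₂ (by simp))
    rw [← inv_mul_eq_iff_eq_mul] at hcomm
    have hmul := Subgroup.mul_mem _ (hGen_mem_closure _ h₂) (hGen_mem_closure _ h₁)
    rw [← hcomm]
    exact Subgroup.mul_mem _ (Subgroup.inv_mem _ hmul)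
      (Subgroup.mul_mem _ (hGen_mem_closure _ h₁) (hGen_mem_closure _ h₂))

theorem FSymIn_le_closure (hn : 2 ≤ n) :
    FSymIn n ≤ Subgroup.closure (houghtonGenSet n h0) := by
  have hswap := swap_mem_of_gGen_mem (h0 := h0) hn
    (V := (Subgroup.closure (houghtonGenSet n h0)).map (Houghton n).subtype)
    (Subgroup.mem_map_of_mem _ (hAlpha_mem_closure hn))
    fun i hi => Subgroup.mem_map_of_mem _ (hGen_mem_closure i hi)
  have hle : FSymSub n ≤ (Subgroup.closure (houghtonGenSet n h0)).map (Houghton n).subtype := by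
    rw [← closure_isSwap_eq_FSymSub, Subgroup.closure_le]
    rintro _ ⟨x, y, -, rfl⟩
    exact hswap x y
  exact fun g hg => (Subgroup.mem_map_iff_mem (Houghton n).subtype_injective).mp (hle hg)

theorem gVec_eq_single_sub_single (hi : i ≠ ray0 n h0) :
    gVec n h0 i = Pi.single i 1 - Pi.single (ray0 n h0) 1 := by
  ext j
  grind [gVec, Pi.sub_apply]

theorem eq_sum_smul_gVec {m : Fin n → ℤ} (hm : ∑ i, m i = 0) :
    m = ∑ i : {i // i ≠ ray0 n h0}, m i • gVec n h0 i := by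
  let v : Fin n → Fin n → ℤ := fun i => m i • (Pi.single i 1 - Pi.single (ray0 n h0) 1)
  calc m = ∑ i, v i := by
        simp only [v, smul_sub, Finset.sum_sub_distrib, ← Finset.sum_smul, hm, zero_smul, sub_zero]
        exact pi_eq_sum_univ' m
    _ = ∑ i ∈ Finset.univ.erase (ray0 n h0), v i := (Finset.sum_erase _ (by simp [v])).symm
    _ = ∑ i : {i // i ≠ ray0 n h0}, v i := Finset.sum_subtype _ (by simp) v
    _ = ∑ i : {i // i ≠ ray0 n h0}, m i • gVec n h0 i :=
      Finset.sum_congr rfl fun i _ => by rw [gVec_eq_single_sub_single i.2]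

theorem closure_houghtonGenSet (hn : 2 ≤ n) (h0 : 0 < n) :
    Subgroup.closure (houghtonGenSet n h0) = ⊤ := by
  have hmap : (⊤ : Subgroup (Houghton n)).map (translationHom n) ≤
      (Subgroup.closure (houghtonGenSet n h0)).map (translationHom n) := by
    rintro _ ⟨g, -, rfl⟩
    have hg : translationHom n g =
        ∏ i : {i // i ≠ ray0 n h0}, translationHom n (hGen n h0 i i.2) ^
          (translationHom n g).toAdd i := by
      apply Multiplicative.toAdd.injective
      simp only [toAdd_prod, toAdd_zpow, translationHom_hGen]
      exact eq_sum_smul_gVec (hasTranslationVector_translationHom g).sum_eq_zero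
    rw [hg]
    refine Subgroup.prod_mem _ fun i _ => Subgroup.zpow_mem _ ?_ _
    exact Subgroup.mem_map_of_mem _ (hGen_mem_closure i.1 i.2)
  rw [Subgroup.map_le_map_iff, ker_translationHom, sup_eq_left.mpr (FSymIn_le_closure hn)] at hmap
  exact top_le_iff.mp hmap

end Generators

/-! ### Homomorphisms with nontrivial kernel -/

theorem quotientGroup_map_eq_one_iff {G H : Type*} [Group G] [Group H] {N : Subgroup G}
    [N.Normal] {M : Subgroup H} [M.Normal] {f : G →* H} (h : N ≤ M.comap f) :
    QuotientGroup.map N M f h = 1 ↔ ∀ g, f g ∈ M := by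
  rw [← MonoidHom.cancel_right (QuotientGroup.mk'_surjective N), MonoidHom.ext_iff]
  exact forall_congr' fun g => QuotientGroup.eq_one_iff (f g)

section Noninjective

variable {n : ℕ} {G : Type*} [Group G]

theorem FSymIn_le_ker_of_isMulTorsionFree [IsMulTorsionFree G] (ψ : Houghton n →* G) :
    FSymIn n ≤ ψ.ker := by
  have hle : FSymSub n ≤ ψ.ker.map (Houghton n).subtype := by
    rw [← closure_isSwap_eq_FSymSub, Subgroup.closure_le]
    rintro _ ⟨x, y, -, rfl⟩
    have hsq : hSwap x y ^ 2 = 1 := Subtype.ext (by simp [hSwap, sq])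
    have hone : ψ (hSwap x y) = 1 := by
      rw [← pow_eq_one_iff_left two_ne_zero, ← map_pow, hsq, map_one]
    exact ⟨hSwap x y, hone, rfl⟩
  exact fun g hg => (Subgroup.mem_map_iff_mem (Houghton n).subtype_injective).mp (hle hg)

theorem FSymIn_le_comap_FSymIn {m : ℕ} (φ : Houghton n →* Houghton m) :
    FSymIn n ≤ (FSymIn m).comap φ := by
  rw [← ker_translationHom (n := m), MonoidHom.comap_ker]
  exact FSymIn_le_ker_of_isMulTorsionFree _

theorem exists_isSwap_list_prod_eq {g : Equiv.Perm (XH n)} (hg : g ∈ FSymSub n) :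
    ∃ l : List (Equiv.Perm (XH n)), (∀ τ ∈ l, τ.IsSwap) ∧ l.prod = g := by
  rw [← closure_isSwap_eq_FSymSub] at hg
  obtain ⟨l, hl, hprod⟩ := exists_list_prod_eq_of_mem_closure hg
  refine ⟨l, fun τ hτ => (hl τ hτ).elim id fun ⟨x, y, hxy, h⟩ => ⟨x, y, hxy, ?_⟩, hprod⟩
  rw [← inv_inv τ, h, Equiv.swap_inv]

theorem mul_inv_mem_FAltIn {g h : Houghton n} (hg : g ∈ FSymIn n) (hg' : g ∉ FAltIn n)
    (hh : h ∈ FSymIn n) (hh' : h ∉ FAltIn n) : g * h⁻¹ ∈ FAltIn n := by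
  replace hh := (FSymIn n).inv_mem hh
  rw [← (FAltIn n).inv_mem_iff] at hh'
  obtain ⟨l, hl, hlprod⟩ := exists_isSwap_list_prod_eq hg
  obtain ⟨l', hl', hlprod'⟩ := exists_isSwap_list_prod_eq hh
  have hodd : ¬ Even l.length := fun he => hg' ⟨l, hl, he, hlprod⟩
  have hodd' : ¬ Even l'.length := fun he => hh' ⟨l', hl', he, hlprod'⟩
  refine ⟨l ++ l', fun τ hτ => (List.mem_append.mp hτ).elim (hl τ) (hl' τ), ?_, ?_⟩
  · rw [List.length_append, Nat.even_add]
    exact iff_of_false hodd hodd'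
  · rw [List.prod_append, hlprod, hlprod']
    rfl

variable {φ : Houghton n →* G}

theorem FAltIn_le_ker (hker : φ.ker ≠ ⊥) : FAltIn n ≤ φ.ker := by
  rintro g ⟨l, hl, heven, hprod⟩
  obtain hn | hn := isEmpty_or_nonempty (Fin n)
  · exact Subsingleton.elim 1 g ▸ φ.ker.one_mem
  have hnorm : ∀ x y, Equiv.swap x y ∈
      Subgroup.normalizer (φ.ker.map (Houghton n).subtype : Set (Equiv.Perm (XH n))) := by
    intro x y
    refine Subgroup.le_normalizer_map (Houghton n).subtype ⟨hSwap x y, ?_, rfl⟩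
    rw [Subgroup.normalizer_eq_top]
    exact Subgroup.mem_top _
  have hne : φ.ker.map (Houghton n).subtype ≠ ⊥ := by
    rwa [Ne, Subgroup.map_eq_bot_iff_of_injective _ (Houghton n).subtype_injective]
  have hmem := list_prod_mem_of_even_length
    (fun σ hσ τ hτ => mul_mem_of_isSwap hnorm hne hσ hτ) hl heven
  rw [hprod] at hmem
  exact (Subgroup.mem_map_iff_mem (Houghton n).subtype_injective).mp hmem

theorem map_eq_map_of_notMem_FAltIn (hker : φ.ker ≠ ⊥) {g h : Houghton n} (hg : g ∈ FSymIn n)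
    (hg' : g ∉ FAltIn n) (hh : h ∈ FSymIn n) (hh' : h ∉ FAltIn n) : φ g = φ h := by
  rw [← mul_inv_eq_one, ← map_inv, ← map_mul]
  exact FAltIn_le_ker hker (mul_inv_mem_FAltIn hg hg' hh hh')

theorem finite_image_FSymIn (hker : φ.ker ≠ ⊥) : (φ '' FSymIn n).Finite := by
  have hodd : (φ '' (FSymIn n \ FAltIn n)).Subsingleton := by
    rintro _ ⟨g, ⟨hg, hg'⟩, rfl⟩ _ ⟨h, ⟨hh, hh'⟩, rfl⟩
    exact map_eq_map_of_notMem_FAltIn hker hg hg' hh hh'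
  refine (hodd.finite.insert 1).subset ?_
  rintro _ ⟨g, hg, rfl⟩
  by_cases hg' : g ∈ FAltIn n
  · exact Or.inl (FAltIn_le_ker hker hg')
  · exact Or.inr ⟨g, ⟨hg, hg'⟩, rfl⟩

end Noninjective

section Endomorphism

variable {n : ℕ} {φ : Houghton n →* Houghton n}

/-- The endomorphism of `FSym_n` obtained by restricting an endomorphism of `H_n`. -/
def fsymRestrict (φ : Houghton n →* Houghton n) : FSymIn n →* FSymIn n :=
  φ.restrict (show Set.MapsTo φ (FSymIn n) (FSymIn n) from FSymIn_le_comap_FSymIn φ)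

theorem subgroupOf_le_comap_fsymRestrict (hker : φ.ker ≠ ⊥) :
    (FAltIn n).subgroupOf (FSymIn n) ≤
      ((FAltIn n).subgroupOf (FSymIn n)).comap (fsymRestrict φ) := by
  intro g hg
  have hone : φ g = 1 := FAltIn_le_ker hker hg
  change φ g ∈ FAltIn n
  exact hone ▸ (FAltIn n).one_mem

/-- If `φ g` is odd for some `g` in `FSym_n`, then `g` and `φ g` are both odd, so they have the same
image and `φ g` is a nontrivial fixed point. -/
theorem not_isEventuallyTrivial_of_notMem_FAltIn (hker : φ.ker ≠ ⊥) {g : Houghton n}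
    (hg : g ∈ FSymIn n) (hφg : φ g ∉ FAltIn n) : ¬ IsEventuallyTrivial φ := by
  rintro ⟨k, -, hk⟩
  have hodd : g ∉ FAltIn n := fun hg' =>
    hφg ((show φ g = 1 from FAltIn_le_ker hker hg') ▸ (FAltIn n).one_mem)
  have hfix : φ (φ g) = φ g :=
    map_eq_map_of_notMem_FAltIn hker (FSymIn_le_comap_FSymIn φ hg) hφg hg hodd
  rw [← Function.iterate_fixed hfix k, hk] at hφg
  exact hφg (FAltIn n).one_mem

theorem isEventuallyTrivial_of_map_FSymIn_le [(FSymIn n).Normal] (hker : φ.ker ≠ ⊥)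
    {ψ : Houghton n ⧸ FSymIn n →* Houghton n ⧸ FSymIn n}
    (hψ : Function.Semiconj (QuotientGroup.mk' (FSymIn n)) φ ψ) (hψ' : IsEventuallyTrivial ψ)
    (hφ : ∀ g ∈ FSymIn n, φ g ∈ FAltIn n) : IsEventuallyTrivial φ := by
  obtain ⟨k, -, hk⟩ := hψ'
  refine ⟨k + 2, by omega, fun g => ?_⟩
  have hmem : (⇑φ)^[k] g ∈ FSymIn n := by
    rw [← QuotientGroup.eq_one_iff]
    exact ((hψ.iterate_right k).eq g).trans (hk _)
  rw [add_comm, Function.iterate_add_apply]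
  exact FAltIn_le_ker hker (hφ _ hmem)

end Endomorphism

/-- Let `n ≥ 2` and let `φ` be an endomorphism of `H_n` with
nontrivial kernel.  Then (i) `φ(FSym_n) ⊆ FSym_n` and `FAlt_n ⊆ ker φ`;
(ii) writing `φ'` for the induced endomorphism of `FSym_n/FAlt_n` and `φ̄` for
the induced endomorphism of `H_n/FSym_n`, if `φ'` is nontrivial and `φ̄` is
eventually trivial then `GR(φ) = 1`, and otherwise `GR(φ) = GR(φ̄)`. -/
theorem growthRate_of_noninjective_endomorphism
    (n : ℕ) (hn : 2 ≤ n) (h0 : 0 < n)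
    [hFN : (FSymIn n).Normal]
    [hAN : ((FAltIn n).subgroupOf (FSymIn n)).Normal]
    (φ : Houghton n →* Houghton n) (hker : φ.ker ≠ ⊥) :
    (∀ g : Houghton n, (g : Equiv.Perm (XH n)) ∈ FSymSub n →
        ((φ g : Houghton n) : Equiv.Perm (XH n)) ∈ FSymSub n) ∧
    (∀ g : Houghton n, (g : Equiv.Perm (XH n)) ∈ FAltSub n → φ g = 1) ∧
    ∃ (φbar : Houghton n ⧸ FSymIn n →* Houghton n ⧸ FSymIn n)
      (φ' : FSymIn n ⧸ (FAltIn n).subgroupOf (FSymIn n) →*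
            FSymIn n ⧸ (FAltIn n).subgroupOf (FSymIn n)),
      (∀ g : Houghton n, φbar (QuotientGroup.mk g) = QuotientGroup.mk (φ g)) ∧
      (∀ g h : FSymIn n, φ (↑g : Houghton n) = (↑h : Houghton n) →
        φ' (QuotientGroup.mk g) = QuotientGroup.mk h) ∧
      ((φ' ≠ 1 ∧ (∃ k : ℕ, 1 ≤ k ∧ ∀ x, (⇑φbar)^[k] x = 1)) →
        growthRate (houghtonGenSet n h0) φ = 1) ∧
      (¬(φ' ≠ 1 ∧ (∃ k : ℕ, 1 ≤ k ∧ ∀ x, (⇑φbar)^[k] x = 1)) →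
        growthRate (houghtonGenSet n h0) φ =
          growthRate (QuotientGroup.mk '' houghtonGenSet n h0) φbar) := by
  let π := QuotientGroup.mk' (FSymIn n)
  let φbar := QuotientGroup.map _ _ φ (FSymIn_le_comap_FSymIn φ)
  let φ' := QuotientGroup.map _ _ _ (subgroupOf_le_comap_fsymRestrict hker)
  have hπ : Function.Surjective π := QuotientGroup.mk'_surjective _
  have hsemi : Function.Semiconj π φ φbar := fun _ => rfl
  have himage : (φ '' π.ker).Finite := by
    rw [QuotientGroup.ker_mk']
    exact finite_image_FSymIn hker
  have hS := closure_houghtonGenSet hn h0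
  have hfin := finite_houghtonGenSet n h0
  refine ⟨fun g hg => FSymIn_le_comap_FSymIn φ hg, fun g hg => FAltIn_le_ker hker hg, φbar, φ',
    fun _ => rfl, fun g h hgh => congrArg QuotientGroup.mk (Subtype.ext hgh), ?_, fun hnot => ?_⟩
  · rintro ⟨hφ', hbar : IsEventuallyTrivial φbar⟩
    obtain ⟨g, hg⟩ := not_forall.mp ((quotientGroup_map_eq_one_iff _).not.mp hφ')
    have hφ := not_isEventuallyTrivial_of_notMem_FAltIn hker g.2 hg
    rw [growthRate_eq_max_one hS hfin hπ hsemi himage hφ, hbar.growthRate_eq_zero]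
    exact max_eq_left zero_le_one
  · by_cases hbar : IsEventuallyTrivial φbar
    · have hφ' : φ' = 1 := not_not.mp fun h => hnot ⟨h, hbar⟩
      have hFAlt := (quotientGroup_map_eq_one_iff _).mp hφ'
      have hφ := isEventuallyTrivial_of_map_FSymIn_le hker hsemi hbar fun g hg => hFAlt ⟨g, hg⟩
      rw [hφ.growthRate_eq_zero, hbar.growthRate_eq_zero]
    · exact growthRate_eq_of_not_isEventuallyTrivial (π := π) hS hfin hπ hsemi himage hbar
end

section
/- For every automorphism φ of Houghton's group H_2, the growth rate GR(φ) equals 1. -/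
/-!
Joining the two rays of `X_2` end to end turns `H_2` into the group of permutations of `ℤ` which
are translations near infinity, generated by `t : x ↦ x + 1` and the transposition `(0 1)`; the
amount of translation is a homomorphism onto `ℤ` with kernel the finitely supported permutations.
An automorphism `φ` induces `±1` on this quotient. Every transposition `(i i+1)` is the conjugate
of `(0 1)` by `t ^ i`, and conjugation by `φ t`, which translates by `±1`, enlarges supports by at
most one up to a bounded error; so `φ` enlarges the support of a finitely supported permutation by
a bounded amount. As a permutation supported in `[-r, r]` has word length `O(r ^ 3)`, finitely
supported elements have polynomially growing orbits, and then so does `t`, as `φ t` is `t` or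
`t⁻¹` times a finitely supported permutation. Finally, `φ^k t` is never trivial.
-/

open Equiv Filter Function Set Topology

section WordBall

variable {G H : Type*} [Group G] [Group H] {S T : Set G} {m n : ℕ} {g h : G}

/-- The ball of radius `n` about `1` in the word metric: the products of at most `n` elements of
`S ∪ S⁻¹`. Unlike a bound on `wordLength`, whose `sInf` is `0` off the subgroup generated by `S`,
membership always provides a word. -/
def wordBall (S : Set G) (n : ℕ) : Set G :=
  {g | ∃ l : List G, (∀ x ∈ l, x ∈ S ∨ x⁻¹ ∈ S) ∧ l.length ≤ n ∧ l.prod = g}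

theorem wordBall_mono (hmn : m ≤ n) : wordBall S m ⊆ wordBall S n :=
  fun _ ⟨l, hl, hlen, hprod⟩ => ⟨l, hl, hlen.trans hmn, hprod⟩

theorem one_mem_wordBall : (1 : G) ∈ wordBall S n := ⟨[], by simp⟩

theorem mem_wordBall_of_mem (hg : g ∈ S) : g ∈ wordBall S 1 := ⟨[g], by simp [hg]⟩

theorem mul_mem_wordBall (hg : g ∈ wordBall S m) (hh : h ∈ wordBall S n) :
    g * h ∈ wordBall S (m + n) := by
  obtain ⟨l, hl, hlen, rfl⟩ := hg
  obtain ⟨l', hl', hlen', rfl⟩ := hh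
  refine ⟨l ++ l', fun x hx => ?_, by simpa using add_le_add hlen hlen', List.prod_append⟩
  exact (List.mem_append.mp hx).elim (hl x) (hl' x)

theorem inv_mem_wordBall (hg : g ∈ wordBall S n) : g⁻¹ ∈ wordBall S n := by
  obtain ⟨l, hl, hlen, rfl⟩ := hg
  refine ⟨(l.map fun x => x⁻¹).reverse, fun x hx => ?_, by simpa using hlen,
    (List.prod_inv_reverse l).symm⟩
  obtain ⟨y, hy, rfl⟩ := List.mem_map.mp (List.mem_reverse.mp hx)
  simpa [or_comm] using hl y hy

theorem pow_mem_wordBall (hg : g ∈ wordBall S m) (n : ℕ) : g ^ n ∈ wordBall S (n * m) := by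
  induction n with
  | zero => simpa using one_mem_wordBall
  | succ n ih => simpa only [pow_succ, add_one_mul] using mul_mem_wordBall ih hg

theorem zpow_mem_wordBall (hg : g ∈ wordBall S m) (i : ℤ) :
    g ^ i ∈ wordBall S (i.natAbs * m) := by
  obtain ⟨n, rfl | rfl⟩ := i.eq_nat_or_neg
  · simpa using pow_mem_wordBall hg n
  · simpa using inv_mem_wordBall (pow_mem_wordBall hg n)

theorem wordBall_subset_closure : wordBall S n ⊆ Subgroup.closure S := by
  rintro _ ⟨l, hl, -, rfl⟩
  refine Subgroup.list_prod_mem _ fun x hx => (hl x hx).elim (Subgroup.subset_closure ·) ?_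
  exact fun hx' => inv_mem_iff.mp (Subgroup.subset_closure hx')

theorem wordBall_subset_wordBall_mul (hST : S ⊆ wordBall T m) :
    wordBall S n ⊆ wordBall T (n * m) := by
  rintro _ ⟨l, hl, hlen, rfl⟩
  refine wordBall_mono (Nat.mul_le_mul_right m hlen) ?_
  clear hlen
  induction l with
  | nil => exact one_mem_wordBall
  | cons x l ih =>
    have hx : x ∈ wordBall T m := by
      rcases hl x List.mem_cons_self with hx | hx
      · exact hST hx
      · simpa using inv_mem_wordBall (hST hx)
    have hprod := mul_mem_wordBall hx (ih fun y hy => hl y (List.mem_cons_of_mem x hy))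
    rwa [List.prod_cons, List.length_cons, add_one_mul, add_comm]

theorem mem_wordBall_of_map_mem {f : G →* H} (hf : Injective f)
    (hg : f g ∈ wordBall (f '' S) n) : g ∈ wordBall S n := by
  obtain ⟨l, hl, hlen, hprod⟩ := hg
  have hlift : ∀ x ∈ l, ∃ y, f y = x ∧ (y ∈ S ∨ y⁻¹ ∈ S) := by
    intro x hx
    rcases hl x hx with ⟨y, hy, hyx⟩ | ⟨y, hy, hyx⟩
    · exact ⟨y, hyx, .inl hy⟩
    · exact ⟨y⁻¹, by rw [map_inv, hyx, inv_inv], .inr (by rwa [inv_inv])⟩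
  choose! lift map_lift lift_mem using hlift
  refine ⟨l.map lift, fun y hy => ?_, by simpa using hlen, hf ?_⟩
  · obtain ⟨x, hx, rfl⟩ := List.mem_map.mp hy
    exact lift_mem x hx
  · have hid : l.map (f ∘ lift) = l := (List.map_congr_left map_lift).trans l.map_id
    rw [map_list_prod, List.map_map, hid, hprod]

theorem wordLength_le_of_mem_wordBall (hg : g ∈ wordBall S n) : wordLength S g ≤ n := by
  obtain ⟨l, hl, hlen, hprod⟩ := hg
  have hle : wordLength S g ≤ l.length := Nat.sInf_le ⟨l, hl, rfl, hprod⟩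
  exact hle.trans hlen

theorem wordLength_pos_of_mem_wordBall (hg : g ∈ wordBall S n) (hne : g ≠ 1) :
    0 < wordLength S g := by
  obtain ⟨l, hl, -, hprod⟩ := hg
  obtain ⟨l', -, hlen', hprod'⟩ :=
    Nat.sInf_mem (s := {k | ∃ l : List G, (∀ x ∈ l, x ∈ S ∨ x⁻¹ ∈ S) ∧ l.length = k ∧ l.prod = g})
      ⟨_, l, hl, rfl, hprod⟩
  rw [wordLength, ← hlen', List.length_pos_iff]
  rintro rfl
  exact hne hprod'.symm

end WordBall

section PolynomialGrowth

variable {G : Type*} [Group G] {S : Set G} {φ : G →* G}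

/-- The elements whose forward orbit under `φ` has polynomially bounded word length. -/
def polyGrowthSubgroup (S : Set G) (φ : G →* G) : Subgroup G where
  carrier := {g | ∃ C d : ℕ, ∀ k, φ^[k] g ∈ wordBall S (C * (k + 1) ^ d)}
  one_mem' := ⟨0, 0, fun k => by simpa only [iterate_map_one] using one_mem_wordBall⟩
  mul_mem' := by
    rintro g h ⟨C, d, hg⟩ ⟨C', d', hh⟩
    refine ⟨C + C', max d d', fun k => ?_⟩
    rw [iterate_map_mul, add_mul]
    refine mul_mem_wordBall (wordBall_mono ?_ (hg k)) (wordBall_mono ?_ (hh k))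
    · gcongr
      exacts [k.succ_pos, le_max_left d d']
    · gcongr
      exacts [k.succ_pos, le_max_right d d']
  inv_mem' := by
    rintro g ⟨C, d, hg⟩
    exact ⟨C, d, fun k => by simpa only [iterate_map_inv] using inv_mem_wordBall (hg k)⟩

theorem mem_polyGrowthSubgroup {g : G} :
    g ∈ polyGrowthSubgroup S φ ↔ ∃ C d : ℕ, ∀ k, φ^[k] g ∈ wordBall S (C * (k + 1) ^ d) :=
  Iff.rfl

-- The words for `φ^[k] f` are summed over `k`, which costs one degree.
theorem mem_polyGrowthSubgroup_of_map_eq_zpow_mul {g f : G} {e : ℤ} (hg : g ∈ S)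
    (hf : f ∈ polyGrowthSubgroup S φ) (he : e.natAbs ≤ 1) (hφg : φ g = g ^ e * f) :
    g ∈ polyGrowthSubgroup S φ := by
  obtain ⟨C, d, hf⟩ := hf
  refine ⟨C + 1, d + 1, fun k => ?_⟩
  induction k with
  | zero => exact wordBall_mono (by simp) (mem_wordBall_of_mem hg)
  | succ k ih =>
    have hpow := zpow_mem_wordBall ih e
    rw [iterate_succ_apply, hφg, iterate_map_mul, iterate_map_zpow]
    refine wordBall_mono ?_ (mul_mem_wordBall hpow (hf k))
    calc e.natAbs * ((C + 1) * (k + 1) ^ (d + 1)) + C * (k + 1) ^ d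
        ≤ 1 * ((C + 1) * (k + 1) ^ (d + 1)) + C * (k + 1) ^ d := by gcongr
      _ ≤ (C + 1) * ((k + 1 + 1) * (k + 1) ^ d) := by
          rw [pow_succ]; nlinarith [Nat.zero_le ((k + 1) ^ d)]
      _ ≤ (C + 1) * (k + 1 + 1) ^ (d + 1) := by
          rw [pow_succ']; gcongr; omega

theorem tendsto_const_mul_pow_rpow_one_div {C : ℝ} (hC : 0 < C) (d : ℕ) :
    Tendsto (fun k : ℕ => (C * ((k : ℝ) + 1) ^ d) ^ (1 / (k : ℝ))) atTop (𝓝 1) := by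
  have hconst : Tendsto (fun k : ℕ => C ^ (1 / (k : ℝ))) atTop (𝓝 1) := by
    simpa using tendsto_const_nhds.rpow tendsto_one_div_atTop_nhds_zero_nat (.inl hC.ne')
  have hpow : Tendsto (fun k : ℕ => ((k : ℝ) + 1) ^ ((d : ℝ) / k)) atTop (𝓝 1) := by
    have h := (tendsto_rpow_div_mul_add d 1 (-1) zero_ne_one).comp
      (tendsto_atTop_add_const_right _ (1 : ℝ) tendsto_natCast_atTop_atTop)
    simpa [comp_def] using h
  have hmul := hconst.mul hpow
  rw [mul_one] at hmul
  refine hmul.congr fun k => ?_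
  rw [Real.mul_rpow hC.le (by positivity), ← Real.rpow_natCast_mul (by positivity), mul_one_div]

theorem growthRate_eq_one_of_polyGrowthSubgroup_eq_top (h : polyGrowthSubgroup S φ = ⊤)
    {g : G} (hg : ∀ k, φ^[k] g ≠ 1) : growthRate S φ = 1 := by
  have hpoly (x : G) : ∃ C d : ℕ, ∀ k, φ^[k] x ∈ wordBall S (C * (k + 1) ^ d) :=
    mem_polyGrowthSubgroup.mp (h ▸ Subgroup.mem_top x)
  let root (x : G) (k : ℕ) : ℝ := (wordLength S (φ^[k] x) : ℝ) ^ (1 / (k : ℝ))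
  have root_nonneg (x : G) (k : ℕ) : 0 ≤ root x k := by positivity
  have root_le (x : G) : ∃ u : ℕ → ℝ, Tendsto u atTop (𝓝 1) ∧ ∀ k, root x k ≤ u k := by
    obtain ⟨C, d, hx⟩ := hpoly x
    refine ⟨_, tendsto_const_mul_pow_rpow_one_div (C := C + 1) (by positivity) d, fun k => ?_⟩
    have hlen := wordLength_le_of_mem_wordBall (hx k)
    refine Real.rpow_le_rpow (by positivity) ?_ (by positivity)
    calc (wordLength S (φ^[k] x) : ℝ) ≤ C * ((k : ℝ) + 1) ^ d := mod_cast hlen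
      _ ≤ (C + 1) * ((k : ℝ) + 1) ^ d := by gcongr; exact le_add_of_nonneg_right zero_le_one
  have limsup_le (x : G) : limsup (root x) atTop ≤ 1 := by
    obtain ⟨u, hu, hle⟩ := root_le x
    rw [← hu.limsup_eq]
    exact limsup_le_limsup (.of_forall hle) (isCoboundedUnder_le_of_le _ (root_nonneg x))
      hu.isBoundedUnder_le
  have one_le_root (k : ℕ) : 1 ≤ root g k := by
    obtain ⟨C, d, hx⟩ := hpoly g
    have hlen := wordLength_pos_of_mem_wordBall (hx k) (hg k)
    exact Real.one_le_rpow (mod_cast hlen) (by positivity)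
  have limsup_eq : limsup (root g) atTop = 1 := by
    obtain ⟨u, hu, hle⟩ := root_le g
    exact (tendsto_of_tendsto_of_tendsto_of_le_of_le tendsto_const_nhds hu one_le_root
      hle).limsup_eq
  refine le_antisymm (ciSup_le limsup_le) (limsup_eq.ge.trans ?_)
  exact le_ciSup (f := fun x => limsup (root x) atTop) ⟨1, forall_mem_range.mpr limsup_le⟩ g

end PolynomialGrowth

section SwapFactorization

theorem mem_wordBall_of_swap_mem_wordBall {α : Type*} [DecidableEq α] {S : Set (Perm α)} {m : ℕ}
    {s : Finset α} (hS : ∀ x ∈ s, ∀ y ∈ s, swap x y ∈ wordBall S m) {f : Perm α}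
    (hf : ∀ x ∉ s, f x = x) : f ∈ wordBall S (s.card * m) := by
  induction s using Finset.induction_on generalizing f with
  | empty => simpa [show f = 1 from Perm.ext fun x => hf x (Finset.notMem_empty x)]
      using one_mem_wordBall
  | insert a s ha ih =>
    have hfa : f a ∈ insert a s := by
      by_contra hmem
      rw [f.injective (hf _ hmem)] at hmem
      exact hmem (Finset.mem_insert_self a s)
    have hfix : ∀ x ∉ s, (swap a (f a) * f) x = x := by
      intro x hx
      rcases eq_or_ne x a with rfl | hxa
      · exact swap_apply_right x (f x)
      · have hx' : x ∉ insert a s := by simp [hx, hxa]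
        rw [Perm.mul_apply, hf x hx', swap_apply_of_ne_of_ne hxa]
        exact fun h => hx' (h ▸ hfa)
    have hrest := ih (fun x hx y hy => hS x (Finset.mem_insert_of_mem hx) y
      (Finset.mem_insert_of_mem hy)) hfix
    have hprod := mul_mem_wordBall (hS a (Finset.mem_insert_self a s) (f a) hfa) hrest
    rw [swap_mul_self_mul] at hprod
    rwa [Finset.card_insert_of_notMem ha, add_one_mul, add_comm]

variable {S : Set (Perm ℤ)}

theorem swap_mem_wordBall_of_lt {i j : ℤ} (hij : i < j)
    (hS : ∀ k, i ≤ k → k < j → swap k (k + 1) ∈ S) :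
    swap i j ∈ wordBall S (2 * (j - i).natAbs) := by
  induction j, Int.add_one_le_iff.mpr hij using Int.leInduction with
  | base => exact wordBall_mono (by omega) (mem_wordBall_of_mem (hS i le_rfl (by omega)))
  | succ j hj ih =>
    have hlast := mem_wordBall_of_mem (hS j (by omega) (by omega))
    have hfront := ih (by omega) fun k hik hkj => hS k hik (by omega)
    rw [swap_comm i (j + 1), ← swap_mul_swap_mul_swap (y := j) (by omega) (by omega)]
    exact wordBall_mono (by omega) (mul_mem_wordBall (mul_mem_wordBall hlast hfront) hlast)

/-- The permutations of `ℤ` supported in `[-r, r]`. -/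
def supportedWithin (r : ℕ) : Subgroup (Perm ℤ) :=
  fixingSubgroup (Perm ℤ) {x : ℤ | r < x.natAbs}

theorem mem_supportedWithin {r : ℕ} {f : Perm ℤ} :
    f ∈ supportedWithin r ↔ ∀ x : ℤ, r < x.natAbs → f x = x :=
  mem_fixingSubgroup_iff _

theorem supportedWithin_mono : Monotone supportedWithin :=
  fun _ _ hrs => fixingSubgroup_antitone _ _ fun _ hx => hrs.trans_lt hx

theorem exists_mem_supportedWithin {f : Perm ℤ} (hf : ∀ᶠ x in cofinite, f x = x) :
    ∃ r, f ∈ supportedWithin r := by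
  obtain ⟨r, hr⟩ := (Set.Finite.image Int.natAbs (eventually_cofinite.mp hf)).bddAbove
  refine ⟨r, mem_supportedWithin.mpr fun x hx => by_contra fun hfx => ?_⟩
  exact hx.not_ge (hr (mem_image_of_mem _ hfx))

theorem mem_wordBall_of_mem_supportedWithin {r : ℕ} {f : Perm ℤ} (hf : f ∈ supportedWithin r)
    (hS : ∀ i : ℤ, i.natAbs ≤ r → swap i (i + 1) ∈ S) :
    f ∈ wordBall S ((2 * r + 1) * (4 * r)) := by
  have hswap : ∀ i ∈ Finset.Icc (-r : ℤ) r, ∀ j ∈ Finset.Icc (-r : ℤ) r,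
      swap i j ∈ wordBall S (4 * r) := by
    intro i hi j hj
    rw [Finset.mem_Icc] at hi hj
    wlog hij : i ≤ j generalizing i j
    · exact swap_comm i j ▸ this j hj i hi (by omega)
    rcases hij.eq_or_lt with rfl | hij
    · exact swap_self i ▸ one_mem_wordBall
    · exact wordBall_mono (by omega)
        (swap_mem_wordBall_of_lt hij fun k hik hkj => hS k (by omega))
  have hmem := mem_wordBall_of_swap_mem_wordBall hswap fun x hx =>
    mem_supportedWithin.mp hf x (by rw [Finset.mem_Icc] at hx; omega)
  rwa [Int.card_Icc, show (r + 1 - -r : ℤ).toNat = 2 * r + 1 by omega] at hmem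

end SwapFactorization

section EventualTranslation

variable {f g : Perm ℤ} {m n : ℤ}

theorem eq_of_eventually_eq_add_atTop_atBot (htop : ∀ᶠ x in atTop, f x = x + m)
    (hbot : ∀ᶠ x in atBot, f x = x + n) : m = n := by
  obtain ⟨b, hb⟩ := eventually_atBot.mp hbot
  obtain ⟨a, hab, ha⟩ :=
    ((eventually_ge_atTop (b + 2)).and (eventually_forall_ge_atTop.mpr htop)).exists
  have image_Iic : f '' Iic b = Iic (b + n) := by
    rw [← image_add_const_Iic]
    exact image_congr fun x hx => hb x hx
  have image_Ici : f '' Ici a = Ici (a + m) := by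
    rw [← image_add_const_Ici]
    exact image_congr fun x hx => ha x hx
  have Ioo_eq_compl (x y : ℤ) : Ioo x y = (Iic x ∪ Ici y)ᶜ := by
    ext z; simp
  have image_Ioo : f '' Ioo b a = Ioo (b + n) (a + m) := by
    rw [Ioo_eq_compl, image_compl_eq f.bijective, image_union, image_Iic, image_Ici, Ioo_eq_compl]
  have hcard := congrArg ncard image_Ioo
  rw [ncard_image_of_injective _ f.injective, ← Finset.coe_Ioo, ← Finset.coe_Ioo,
    ncard_coe_finset, ncard_coe_finset, Int.card_Ioo, Int.card_Ioo] at hcard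
  omega

theorem eq_of_eventually_eq_add (hm : ∀ᶠ x in cofinite, f x = x + m)
    (hn : ∀ᶠ x in cofinite, f x = x + n) : m = n := by
  obtain ⟨x, hxm, hxn⟩ := (hm.and hn).exists
  exact add_left_cancel (hxm.symm.trans hxn)

theorem eventually_mul_apply_eq_add (hf : ∀ᶠ x in cofinite, f x = x + m)
    (hg : ∀ᶠ x in cofinite, g x = x + n) : ∀ᶠ x in cofinite, (f * g) x = x + (m + n) := by
  filter_upwards [hg, g.injective.tendsto_cofinite.eventually hf] with x hgx hfx
  rw [Perm.mul_apply, hfx, hgx]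
  ring

theorem exists_mapsTo_natAbs_le_succ (hm : m.natAbs ≤ 1) (hf : ∀ᶠ x in cofinite, f x = x + m) :
    ∃ d : ℕ, ∀ r ≥ d, MapsTo f {x | x.natAbs ≤ r} {x | x.natAbs ≤ r + 1} := by
  obtain ⟨d, hd⟩ := (Set.Finite.image Int.natAbs (eventually_cofinite.mp hf)).bddAbove
  have hfd (x : ℤ) (hx : d < x.natAbs) : f x = x + m :=
    by_contra fun hfx => hx.not_ge (hd (mem_image_of_mem _ hfx))
  refine ⟨d, fun r hr x (hx : x.natAbs ≤ r) => by_contra fun hfx => ?_⟩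
  replace hfx : r + 1 < (f x).natAbs := not_le.mp hfx
  -- `f x` is also the image of `f x - m`, which lies in the region where `f` translates.
  have himage : f (f x - m) = f x := by rw [hfd _ (by omega), sub_add_cancel]
  have hx_eq := f.injective himage
  omega

theorem mapsTo_zpow_natAbs_le {d : ℕ}
    (hf : ∀ r ≥ d, MapsTo f {x | x.natAbs ≤ r} {x | x.natAbs ≤ r + 1})
    (hf_inv : ∀ r ≥ d, MapsTo ⇑f⁻¹ {x | x.natAbs ≤ r} {x | x.natAbs ≤ r + 1}) {r : ℕ}
    (hr : d ≤ r) (i : ℤ) :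
    MapsTo ⇑(f ^ i) {x | x.natAbs ≤ r} {x | x.natAbs ≤ r + i.natAbs} := by
  have mapsTo_pow {u : Perm ℤ} (hu : ∀ r ≥ d, MapsTo u {x | x.natAbs ≤ r} {x | x.natAbs ≤ r + 1})
      (n : ℕ) : MapsTo ⇑(u ^ n) {x | x.natAbs ≤ r} {x | x.natAbs ≤ r + n} := by
    induction n with
    | zero => exact mapsTo_id _
    | succ n ih => exact pow_succ' u n ▸ (hu (r + n) (by omega)).comp ih
  obtain ⟨n, rfl | rfl⟩ := i.eq_nat_or_neg
  · simpa using mapsTo_pow hf n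
  · simpa using mapsTo_pow hf_inv n

theorem conj_mem_supportedWithin {r s : ℕ}
    (hg : MapsTo g {x | x.natAbs ≤ r} {x | x.natAbs ≤ s}) (hf : f ∈ supportedWithin r) :
    g * f * g⁻¹ ∈ supportedWithin s := by
  rw [mem_supportedWithin] at hf ⊢
  intro x hx
  have hfix : f (g⁻¹ x) = g⁻¹ x := hf _ <| not_le.mp fun hle =>
    hx.not_ge (by simpa using hg hle)
  rw [Perm.mul_apply, Perm.mul_apply, hfix, Perm.inv_def, apply_symm_apply]

end EventualTranslation

namespace Houghton

/-- `X_2` laid out as a line: the first ray runs down from `1` and the second one up from `2`, so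
that `g_2` becomes `x ↦ x + 1` and `α` becomes the transposition `(0 1)`. -/
def coordinate : XH 2 ≃ ℤ where
  toFun x := if x.1 = 0 then 1 - x.2 else x.2 + 2
  invFun z := if z ≤ 1 then (0, (1 - z).toNat) else (1, (z - 2).toNat)
  left_inv := by
    rintro ⟨i, p⟩
    fin_cases i
    · simp
    · simp [show ¬(p : ℤ) + 2 ≤ 1 by omega]
  right_inv z := by
    rcases le_or_gt z 1 with hz | hz
    · simp [hz]
    · simp [hz.not_ge]; omega

theorem coordinate_apply (x : XH 2) :
    coordinate x = if x.1 = 0 then 1 - (x.2 : ℤ) else x.2 + 2 := rfl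

theorem coordinate_le_one_iff {x : XH 2} : coordinate x ≤ 1 ↔ x.1 = 0 := by
  rw [coordinate_apply]
  split_ifs with hx <;> simp [hx]; omega

/-- The action of `H_2` on the line `ℤ`. -/
def toPermInt : Houghton 2 →* Perm ℤ :=
  coordinate.permCongrHom.toMonoidHom.comp (Houghton 2).subtype

theorem toPermInt_apply_coordinate (g : Houghton 2) (x : XH 2) :
    toPermInt g (coordinate x) = coordinate (g.1 x) :=
  congrArg (fun y => coordinate (g.1 y)) (coordinate.symm_apply_apply x)

theorem toPermInt_injective : Injective toPermInt :=
  coordinate.permCongrHom.injective.comp Subtype.val_injective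

/-- The generator `g_2` of `H_2`. -/
abbrev shift : Houghton 2 := hGen 2 Nat.zero_lt_two 1 (by decide)

/-- The generator `α` of `H_2`. -/
abbrev baseSwap : Houghton 2 := hAlpha 2 Nat.zero_lt_two

theorem houghtonGensOnly_union_hAlpha_eq :
    houghtonGensOnly 2 Nat.zero_lt_two ∪ {hAlpha 2 Nat.zero_lt_two} = {shift, baseSwap} := by
  have hgens : houghtonGensOnly 2 Nat.zero_lt_two = {shift} := by
    ext g
    refine ⟨?_, fun hg => ⟨1, by decide, hg⟩⟩
    rintro ⟨i, hi, rfl⟩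
    obtain rfl : i = 1 := Fin.eq_one_of_ne_zero i hi
    rfl
  rw [hgens, singleton_union]

theorem toPermInt_shift : toPermInt shift = Equiv.addRight 1 := by
  ext z
  obtain ⟨⟨i, p⟩, rfl⟩ := coordinate.surjective z
  rw [toPermInt_apply_coordinate]
  change coordinate (gFun 2 Nat.zero_lt_two 1 (i, p)) = coordinate (i, p) + 1
  fin_cases i
  · rcases p with _ | p <;> simp [gFun, ray0, coordinate]; omega
  · simp [gFun, ray0, coordinate]; omega

theorem toPermInt_baseSwap : toPermInt baseSwap = swap 0 1 := by
  change coordinate.permCongr (swap (0, 0) (0, 1)) = _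
  rw [permCongr_def, symm_trans_swap_trans, swap_comm]
  rfl

theorem exists_eventually_toPermInt_eq_add (g : Houghton 2) :
    ∃ m : ℤ, ∀ᶠ z in cofinite, toPermInt g z = z + m := by
  obtain ⟨v, K, hK⟩ := g.2
  have hray : ∀ᶠ z in cofinite, toPermInt g z = z + if z ≤ 1 then -v 0 else v 1 := by
    filter_upwards [coordinate.symm.injective.tendsto_cofinite.eventually
      K.eventually_cofinite_notMem] with z hz
    obtain ⟨x, rfl⟩ := coordinate.surjective z
    obtain ⟨hfst, hsnd⟩ := hK x (by rwa [symm_apply_apply] at hz)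
    simp only [toPermInt_apply_coordinate, coordinate_le_one_iff]
    rw [coordinate_apply, coordinate_apply, hfst, hsnd]
    split_ifs with hx
    · rw [hx]; ring
    · rw [Fin.eq_one_of_ne_zero x.1 hx]; ring
  rw [Int.cofinite_eq, eventually_sup] at hray
  have htop : ∀ᶠ z in atTop, toPermInt g z = z + v 1 := by
    filter_upwards [hray.2, eventually_gt_atTop 1] with z hz hlt
    rwa [if_neg hlt.not_ge] at hz
  have hbot : ∀ᶠ z in atBot, toPermInt g z = z + -v 0 := by
    filter_upwards [hray.1, eventually_le_atBot 1] with z hz hle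
    rwa [if_pos hle] at hz
  have heq := eq_of_eventually_eq_add_atTop_atBot htop hbot
  refine ⟨v 1, ?_⟩
  rw [Int.cofinite_eq, eventually_sup]
  exact ⟨heq ▸ hbot, htop⟩

/-- The homomorphism `H_2 → ℤ` sending `g` to the amount by which it translates the line near
infinity. -/
noncomputable def translation : Houghton 2 →* Multiplicative ℤ :=
  MonoidHom.mk' (fun g => .ofAdd (exists_eventually_toPermInt_eq_add g).choose) fun g h => by
    refine congrArg Multiplicative.ofAdd (eq_of_eventually_eq_add
      (exists_eventually_toPermInt_eq_add (g * h)).choose_spec ?_)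
    rw [map_mul]
    exact eventually_mul_apply_eq_add (exists_eventually_toPermInt_eq_add g).choose_spec
      (exists_eventually_toPermInt_eq_add h).choose_spec

theorem eventually_toPermInt_eq_add (g : Houghton 2) :
    ∀ᶠ x in cofinite, toPermInt g x = x + (translation g).toAdd :=
  (exists_eventually_toPermInt_eq_add g).choose_spec

theorem translation_shift : translation shift = .ofAdd 1 := by
  refine congrArg Multiplicative.ofAdd
    (eq_of_eventually_eq_add (eventually_toPermInt_eq_add shift) (.of_forall fun x => ?_))
  rw [toPermInt_shift, coe_addRight]

theorem baseSwap_mul_self : baseSwap * baseSwap = 1 := Subtype.ext (swap_mul_self _ _)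

theorem translation_map_baseSwap (φ : Houghton 2 →* Houghton 2) :
    translation (φ baseSwap) = 1 := by
  have hsq : translation (φ baseSwap) ^ 2 = 1 := by
    rw [sq, ← map_mul, ← map_mul, baseSwap_mul_self, map_one, map_one]
  exact (pow_eq_one_iff_left two_ne_zero).mp hsq

theorem translation_baseSwap : translation baseSwap = 1 :=
  translation_map_baseSwap (.id _)

theorem exists_toPermInt_mem_supportedWithin {g : Houghton 2} (hg : translation g = 1) :
    ∃ r, toPermInt g ∈ supportedWithin r :=
  exists_mem_supportedWithin <| by simpa [hg] using eventually_toPermInt_eq_add g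

/-- The element of `H_2` acting on the line as the transposition `(i i+1)`. -/
def adjacentSwap (i : ℤ) : Houghton 2 := shift ^ i * baseSwap * (shift ^ i)⁻¹

theorem toPermInt_adjacentSwap (i : ℤ) : toPermInt (adjacentSwap i) = swap i (i + 1) := by
  rw [adjacentSwap, map_mul, map_mul, map_inv, map_zpow, toPermInt_shift, toPermInt_baseSwap,
    ← swap_apply_apply]
  simp [add_comm]

theorem adjacentSwap_mem_wordBall (i : ℤ) :
    adjacentSwap i ∈ wordBall {shift, baseSwap} (2 * i.natAbs + 1) := by
  have hshift := zpow_mem_wordBall (mem_wordBall_of_mem (S := {shift, baseSwap}) (.inl rfl)) i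
  have hswap : baseSwap ∈ wordBall {shift, baseSwap} 1 := mem_wordBall_of_mem (.inr rfl)
  exact wordBall_mono (by omega)
    (mul_mem_wordBall (mul_mem_wordBall hshift hswap) (inv_mem_wordBall hshift))

theorem mem_wordBall_image_adjacentSwap {g : Houghton 2} {r : ℕ}
    (hg : toPermInt g ∈ supportedWithin r) :
    g ∈ wordBall (adjacentSwap '' {i | i.natAbs ≤ r}) ((2 * r + 1) * (4 * r)) := by
  refine mem_wordBall_of_map_mem toPermInt_injective
    (mem_wordBall_of_mem_supportedWithin hg fun i hi => ?_)
  exact ⟨_, mem_image_of_mem _ hi, toPermInt_adjacentSwap i⟩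

theorem mem_wordBall_of_toPermInt_mem_supportedWithin {g : Houghton 2} {r : ℕ}
    (hg : toPermInt g ∈ supportedWithin r) :
    g ∈ wordBall {shift, baseSwap} (16 * (r + 1) ^ 3) := by
  have hswaps : adjacentSwap '' {i | i.natAbs ≤ r} ⊆ wordBall {shift, baseSwap} (2 * r + 1) :=
    image_subset_iff.mpr fun i (hi : i.natAbs ≤ r) =>
      wordBall_mono (by omega) (adjacentSwap_mem_wordBall i)
  refine wordBall_mono ?_ (wordBall_subset_wordBall_mul hswaps (mem_wordBall_image_adjacentSwap hg))
  calc (2 * r + 1) * (4 * r) * (2 * r + 1)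
      ≤ (2 * (r + 1)) * (4 * (r + 1)) * (2 * (r + 1)) := by gcongr <;> omega
    _ = 16 * (r + 1) ^ 3 := by ring

theorem translation_inv_shift_zpow_mul (g : Houghton 2) :
    translation ((shift ^ (translation g).toAdd)⁻¹ * g) = 1 := by
  simp [translation_shift, ← ofAdd_zsmul]

theorem closure_shift_baseSwap : Subgroup.closure {shift, baseSwap} = ⊤ := by
  refine eq_top_iff.mpr fun g _ => ?_
  have hshift : shift ^ (translation g).toAdd ∈ Subgroup.closure {shift, baseSwap} :=
    zpow_mem (Subgroup.subset_closure (.inl rfl)) _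
  obtain ⟨r, hr⟩ := exists_toPermInt_mem_supportedWithin (translation_inv_shift_zpow_mul g)
  have hrest := wordBall_subset_closure (mem_wordBall_of_toPermInt_mem_supportedWithin hr)
  simpa using mul_mem hshift hrest

theorem translation_map (φ : Houghton 2 →* Houghton 2) (g : Houghton 2) :
    translation (φ g) = translation g ^ (translation (φ shift)).toAdd := by
  let power := (zpowGroupHom (translation (φ shift)).toAdd).comp translation
  refine DFunLike.congr_fun (MonoidHom.eq_of_eqOn_dense (f := translation.comp φ) (g := power)
    closure_shift_baseSwap ?_) g
  rintro g (rfl | rfl)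
  · simp [power, translation_shift, ← ofAdd_zsmul]
  · simp [power, translation_map_baseSwap, translation_baseSwap]

section Endomorphism

variable {φ : Houghton 2 →* Houghton 2}

theorem isUnit_translation_map_shift (hφ : Surjective φ) :
    IsUnit (translation (φ shift)).toAdd := by
  obtain ⟨g, hg⟩ := hφ shift
  have hmul := congrArg Multiplicative.toAdd (translation_map φ g)
  rw [hg, translation_shift, toAdd_zpow, smul_eq_mul, toAdd_ofAdd] at hmul
  exact .of_mul_eq_one _ hmul.symm

theorem translation_iterate_shift_ne_one (he : (translation (φ shift)).toAdd ≠ 0)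
    (k : ℕ) : translation (φ^[k] shift) ≠ 1 := by
  induction k with
  | zero => simp [translation_shift]
  | succ k ih =>
    rw [iterate_succ_apply', translation_map]
    exact (IsMulTorsionFree.zpow_eq_one_iff_left he).not.mpr ih

variable (he : (translation (φ shift)).toAdd.natAbs ≤ 1)

include he

theorem exists_toPermInt_map_mem_supportedWithin_add :
    ∃ C, ∀ r g, toPermInt g ∈ supportedWithin r → toPermInt (φ g) ∈ supportedWithin (r + C) := by
  set u := φ shift
  have hu := eventually_toPermInt_eq_add u
  have hu_inv := eventually_toPermInt_eq_add u⁻¹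
  obtain ⟨d, hd⟩ := exists_mapsTo_natAbs_le_succ he hu
  obtain ⟨d', hd'⟩ := exists_mapsTo_natAbs_le_succ (by simpa using he) hu_inv
  obtain ⟨s, hs⟩ := exists_toPermInt_mem_supportedWithin (translation_map_baseSwap φ)
  set C := max s (max d d')
  refine ⟨C, fun r g hg => ?_⟩
  have hswap (i : ℤ) (hi : i.natAbs ≤ r) :
      toPermInt (φ (adjacentSwap i)) ∈ supportedWithin (r + C) := by
    have hmaps := mapsTo_zpow_natAbs_le (fun r hr => hd r (le_of_max_le_left hr))
      (fun r hr => map_inv toPermInt u ▸ hd' r (le_of_max_le_right hr)) (le_max_right s _) i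
    have hconj := conj_mem_supportedWithin hmaps (supportedWithin_mono (le_max_left s _) hs)
    simp only [adjacentSwap, map_mul, map_inv, map_zpow]
    refine supportedWithin_mono ?_ hconj
    omega
  have hle : Subgroup.closure (adjacentSwap '' {i | i.natAbs ≤ r}) ≤
      (supportedWithin (r + C)).comap (toPermInt.comp φ) :=
    (Subgroup.closure_le _).mpr (image_subset_iff.mpr hswap)
  exact hle (wordBall_subset_closure (mem_wordBall_image_adjacentSwap hg))

theorem mem_polyGrowthSubgroup_of_translation_eq_one {g : Houghton 2} (hg : translation g = 1) :
    g ∈ polyGrowthSubgroup {shift, baseSwap} φ := by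
  obtain ⟨r, hr⟩ := exists_toPermInt_mem_supportedWithin hg
  obtain ⟨C, hC⟩ := exists_toPermInt_map_mem_supportedWithin_add he
  have hsupp (k : ℕ) : toPermInt (φ^[k] g) ∈ supportedWithin (r + k * C) := by
    induction k with
    | zero => simpa using hr
    | succ k ih =>
      rw [iterate_succ_apply', add_one_mul, ← add_assoc]
      exact hC _ _ ih
  refine mem_polyGrowthSubgroup.mpr ⟨16 * (r + C + 1) ^ 3, 3, fun k =>
    wordBall_mono ?_ (mem_wordBall_of_toPermInt_mem_supportedWithin (hsupp k))⟩
  calc 16 * (r + k * C + 1) ^ 3 ≤ 16 * ((r + C + 1) * (k + 1)) ^ 3 := by gcongr; nlinarith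
    _ = 16 * (r + C + 1) ^ 3 * (k + 1) ^ 3 := by ring

theorem polyGrowthSubgroup_eq_top : polyGrowthSubgroup {shift, baseSwap} φ = ⊤ := by
  have hshift : shift ∈ polyGrowthSubgroup {shift, baseSwap} φ :=
    mem_polyGrowthSubgroup_of_map_eq_zpow_mul (.inl rfl)
      (mem_polyGrowthSubgroup_of_translation_eq_one he (translation_inv_shift_zpow_mul _))
      he (mul_inv_cancel_left _ _).symm
  have hswap : baseSwap ∈ polyGrowthSubgroup {shift, baseSwap} φ :=
    mem_polyGrowthSubgroup_of_translation_eq_one he translation_baseSwap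
  rw [eq_top_iff, ← closure_shift_baseSwap, Subgroup.closure_le]
  rintro g (rfl | rfl)
  exacts [hshift, hswap]

end Endomorphism

end Houghton

theorem growthRate_automorphism_H2_eq_one_general (φ : Houghton 2 →* Houghton 2)
    (he : IsUnit (Houghton.translation (φ Houghton.shift)).toAdd) :
    growthRate (houghtonGensOnly 2 Nat.zero_lt_two ∪ {hAlpha 2 Nat.zero_lt_two}) φ = 1 := by
  rw [Houghton.houghtonGensOnly_union_hAlpha_eq]
  have htop := Houghton.polyGrowthSubgroup_eq_top (Int.isUnit_iff_natAbs_eq.mp he).le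
  refine growthRate_eq_one_of_polyGrowthSubgroup_eq_top htop (g := Houghton.shift) fun k hk => ?_
  exact Houghton.translation_iterate_shift_ne_one he.ne_zero k (by rw [hk, map_one])

/-- For every automorphism `φ` of Houghton's group `H_2`, the
growth rate `GR(φ)` (w.r.t. the generating set `{g_2, α}`) equals `1`. -/
theorem growthRate_automorphism_H2_eq_one
    (φ : Houghton 2 ≃* Houghton 2) :
    growthRate
      (houghtonGensOnly 2 (by omega) ∪ {hAlpha 2 (by omega)}) φ.toMonoidHom = 1 :=
  growthRate_automorphism_H2_eq_one_general _ (Houghton.isUnit_translation_map_shift φ.surjective)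
end
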